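/- arXiv:1311.1961 — 6 statements merged into one kernel-verified Lean document; each statement's English description precedes it below -/
import Mathlib

section
/- Let n ≥ 2 and equip ℝⁿ (i.e. Fin n → ℝ) with the Minkowski bilinear form B(u,v) = −u 0 · v 0 + ∑_{i=1}^{n−1} u i · v i (a nondegenerate symmetric bilinear form of index 1). If u, v ∈ ℝⁿ are light-like, i.e. B(u,u) = 0 and B(v,v) = 0, then B(u,v) = 0 if and only if u and v are linearly dependent over ℝ. -/
/-- The Minkowski bilinear form on `ℝⁿ = Fin (n+2) → ℝ` (index 1):
`B(u,v) = -u₀v₀ + Σ_{i=1}^{n+1} uᵢvᵢ`. -/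
noncomputable def minkB (n : ℕ) (u v : Fin (n + 2) → ℝ) : ℝ :=
  -(u 0 * v 0) + ∑ i : Fin (n + 1), u i.succ * v i.succ

theorem minkB_comb (n : ℕ) (u v w : Fin (n + 2) → ℝ) (s t : ℝ)
    (h : s • u + t • v = 0) : s * minkB n u w + t * minkB n v w = 0 := by
  have h' : ∀ i, s * u i + t * v i = 0 := fun i => by simpa using congrFun h i
  have e : s * minkB n u w + t * minkB n v w = -((s * u 0 + t * v 0) * w 0) +
      ∑ i : Fin (n + 1), (s * u i.succ + t * v i.succ) * w i.succ := by
    simp only [minkB, add_mul, Finset.sum_add_distrib, mul_assoc, ← Finset.mul_sum]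
    ring
  rw [e]
  simp [h']

theorem minkB_symm' (n : ℕ) (u v : Fin (n + 2) → ℝ) : minkB n u v = minkB n v u := by
  simp only [minkB, mul_comm]

theorem minkB_zero_of (n : ℕ) (u : Fin (n + 2) → ℝ) (h : minkB n u u = 0) (h0 : u 0 = 0) :
    u = 0 := by
  have h1 : ∑ i : Fin (n + 1), u i.succ * u i.succ = 0 := by simpa [minkB, h0] using h
  rw [Finset.sum_eq_zero_iff_of_nonneg (fun i _ => mul_self_nonneg _)] at h1
  funext i
  refine Fin.cases h0 (fun j => ?_) i
  simpa using h1 j (Finset.mem_univ j)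

theorem minkB_self_comb (n : ℕ) (u v : Fin (n + 2) → ℝ) (s t : ℝ) :
    minkB n (s • u + t • v) (s • u + t • v) =
      s ^ 2 * minkB n u u + 2 * s * t * minkB n u v + t ^ 2 * minkB n v v := by
  simp only [minkB, mul_add, Finset.mul_sum, Pi.add_apply, Pi.smul_apply, smul_eq_mul]
  have : ∑ i : Fin (n + 1), (s * u i.succ + t * v i.succ) * (s * u i.succ + t * v i.succ) =
      ∑ i : Fin (n + 1), s ^ 2 * (u i.succ * u i.succ)
      + ∑ i : Fin (n + 1), 2 * s * t * (u i.succ * v i.succ)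
      + ∑ i : Fin (n + 1), t ^ 2 * (v i.succ * v i.succ) := by
    rw [← Finset.sum_add_distrib, ← Finset.sum_add_distrib]
    exact Finset.sum_congr rfl fun i _ => by ring
  simp only [mul_add] at this
  rw [this]
  ring

/-- Two light-like vectors in Minkowski space are orthogonal if and only if
they are linearly dependent. -/
theorem lightlike_orthogonal_iff_linearDependent
    (n : ℕ) (u v : Fin (n + 2) → ℝ)
    (hu : minkB n u u = 0) (hv : minkB n v v = 0) :
    minkB n u v = 0 ↔ ¬ LinearIndependent ℝ ![u, v] := by
  rw [LinearIndependent.pair_iff]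
  constructor
  · intro h hl
    have hw : v 0 • u + (-u 0) • v = 0 := by
      apply minkB_zero_of
      · rw [minkB_self_comb, hu, hv, h]
        ring
      · simp
        ring
    have h0 : u 0 = 0 := by simpa using (hl _ _ hw).2
    have hu0 := minkB_zero_of n u hu h0
    have := (hl 1 0 (by simp [hu0])).1
    exact one_ne_zero this
  · intro h
    by_contra hB
    refine h fun s t hst => ?_
    have h1 := minkB_comb n u v v s t hst
    have h2 := minkB_comb n u v u s t hst
    rw [hv] at h1
    rw [hu, minkB_symm' n v u] at h2
    constructor
    · simpa [hB] using h1
    · simpa [hB] using h2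
end

section
/- Existence of null coordinates on a Lorentzian surface: let U ⊆ ℝ² be open and let g : U → Matrix (Fin 2) (Fin 2) ℝ be a smooth map such that g(p) is symmetric and det g(p) < 0 for every p ∈ U (so g is a smooth Lorentzian metric on U). Then for every p ∈ U there exist an open set V ⊆ ℝ², a point q ∈ V, a smooth injective map φ : V → U with φ(q) = p whose total derivative Dφ(w) is invertible at every w ∈ V, and a smooth function μ : V → ℝ with μ(w) > 0 for all w ∈ V, such that for all w ∈ V the pulled-back metric satisfies (Dφ(w))ᵀ · g(φ(w)) · Dφ(w) = [[0, −μ(w)], [−μ(w), 0]]; i.e. in the new coordinates the metric has the form −μ·(ds⊗dt + dt⊗ds). -/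
/-- The total derivative of a map `φ : ℝ² → ℝ²` at `w`, viewed as a 2×2 matrix. -/
noncomputable def Dmat (φ : (Fin 2 → ℝ) → (Fin 2 → ℝ)) (w : Fin 2 → ℝ) :
    Matrix (Fin 2) (Fin 2) ℝ :=
  Matrix.of fun i j => fderiv ℝ φ w (Pi.single j 1) i

section NullCoordHelpers

open Set Filter Topology MeasureTheory
open scoped ContDiff

theorem nc_fderiv_partials {Y P Q : ℝ → ℝ → ℝ}
    (hP : ∀ x k, HasDerivAt (fun x => Y x k) (P x k) x)
    (hQ : ∀ x k, HasDerivAt (fun k => Y x k) (Q x k) k)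
    (cP : Continuous (fun z : ℝ × ℝ => P z.1 z.2))
    (cQ : Continuous (fun z : ℝ × ℝ => Q z.1 z.2)) (z : ℝ × ℝ) :
    HasFDerivAt (fun z : ℝ × ℝ => Y z.1 z.2)
      (P z.1 z.2 • ContinuousLinearMap.fst ℝ ℝ ℝ + Q z.1 z.2 • ContinuousLinearMap.snd ℝ ℝ ℝ) z := by
  have h := hasStrictFDerivAt_uncurry_coprod (𝕜 := ℝ) (u := z) (f := Y)
    (f₁ := fun x k => ContinuousLinearMap.toSpanSingleton ℝ (P x k))
    (f₂ := fun x k => ContinuousLinearMap.toSpanSingleton ℝ (Q x k))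
    (Eventually.of_forall fun v => (hP v.1 v.2).hasFDerivAt)
    (Eventually.of_forall fun v => (hQ v.1 v.2).hasFDerivAt)
    (by
      have : Continuous fun z : ℝ × ℝ => ContinuousLinearMap.toSpanSingletonCLE (𝕜 := ℝ) (E := ℝ) (P z.1 z.2) :=
        (ContinuousLinearEquiv.continuous _).comp cP
      exact this.continuousAt)
    (by
      have : Continuous fun z : ℝ × ℝ => ContinuousLinearMap.toSpanSingletonCLE (𝕜 := ℝ) (E := ℝ) (Q z.1 z.2) :=
        (ContinuousLinearEquiv.continuous _).comp cQ
      exact this.continuousAt)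
  have h2 := h.hasFDerivAt
  refine HasFDerivAt.congr_fderiv (f := fun z : ℝ × ℝ => Y z.1 z.2) h2 ?_
  ext <;> simp [Function.HasUncurry.uncurry]

theorem nc_contDiff_partials {Y P Q : ℝ → ℝ → ℝ} (n : ℕ)
    (hP : ∀ x k, HasDerivAt (fun x => Y x k) (P x k) x)
    (hQ : ∀ x k, HasDerivAt (fun k => Y x k) (Q x k) k)
    (cP : ContDiff ℝ n (fun z : ℝ × ℝ => P z.1 z.2))
    (cQ : ContDiff ℝ n (fun z : ℝ × ℝ => Q z.1 z.2)) :
    ContDiff ℝ (n + 1 : ℕ) (fun z : ℝ × ℝ => Y z.1 z.2) := by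
  have H := nc_fderiv_partials hP hQ cP.continuous cQ.continuous
  push_cast
  rw [contDiff_succ_iff_fderiv]
  refine ⟨fun z => (H z).differentiableAt, by simp, ?_⟩
  have : fderiv ℝ (fun z : ℝ × ℝ => Y z.1 z.2) = fun z => (P z.1 z.2 • ContinuousLinearMap.fst ℝ ℝ ℝ + Q z.1 z.2 • ContinuousLinearMap.snd ℝ ℝ ℝ) := funext fun z => (H z).fderiv
  rw [this]
  exact (cP.smul contDiff_const).add (cQ.smul contDiff_const)

theorem nc_hasDerivAt_param (x0 x k : ℝ) {F G : ℝ → ℝ → ℝ}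
    (cF : Continuous (fun z : ℝ × ℝ => F z.1 z.2))
    (cG : Continuous (fun z : ℝ × ℝ => G z.1 z.2))
    (hG : ∀ s k, HasDerivAt (fun k => F s k) (G s k) k) :
    HasDerivAt (fun k => ∫ s in x0..x, F s k) (∫ s in x0..x, G s k) k := by
  obtain ⟨C, hC⟩ := ((isCompact_uIcc (a := x0) (b := x)).prod (isCompact_closedBall k 1)).exists_bound_of_continuousOn cG.continuousOn
  have cF' : ∀ k, Continuous fun s => F s k := fun k => cF.comp (by fun_prop : Continuous fun s : ℝ => (s, k))
  have cG' : ∀ k, Continuous fun s => G s k := fun k => cG.comp (by fun_prop : Continuous fun s : ℝ => (s, k))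
  refine (intervalIntegral.hasDerivAt_integral_of_dominated_loc_of_deriv_le (F := fun k s => F s k) (F' := fun k s => G s k) (bound := fun _ => C) (Metric.ball_mem_nhds k one_pos) ?_ ?_ ?_ ?_ ?_ ?_).2
  · exact Eventually.of_forall fun k => (cF' k).aestronglyMeasurable
  · exact (cF' k).intervalIntegrable _ _
  · exact (cG' k).aestronglyMeasurable
  · refine Eventually.of_forall fun s hs k' hk' => hC (s, k') ⟨uIoc_subset_uIcc hs, Metric.ball_subset_closedBall hk'⟩
  · exact intervalIntegrable_const
  · exact Eventually.of_forall fun s hs k' hk' => hG s k'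

theorem nc_contDiff_param (x0 : ℝ) (n : ℕ) : ∀ {F : ℝ → ℝ → ℝ}
    (_ : ContDiff ℝ n (fun z : ℝ × ℝ => F z.1 z.2)),
    ContDiff ℝ n (fun z : ℝ × ℝ => ∫ s in x0..z.1, F s z.2) := by
  induction n with
  | zero =>
    intro F hF
    simp only [Nat.cast_zero, contDiff_zero] at hF ⊢
    exact intervalIntegral.continuous_parametric_intervalIntegral_of_continuous
      (f := fun z : ℝ × ℝ => fun s => F s z.2)
      (hF.comp (by fun_prop : Continuous fun w : (ℝ × ℝ) × ℝ => (w.2, w.1.2))) continuous_fst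
  | succ n ih =>
    intro F hF
    have hd : Differentiable ℝ (fun z : ℝ × ℝ => F z.1 z.2) := hF.differentiable (by simp)
    set G : ℝ → ℝ → ℝ := fun s k => fderiv ℝ (fun z : ℝ × ℝ => F z.1 z.2) (s, k) (0, 1) with hGdef
    have hG : ∀ s k, HasDerivAt (fun k => F s k) (G s k) k := by
      intro s k
      have := (hd (s, k)).hasFDerivAt.comp_hasDerivAt k ((hasDerivAt_const k s).prodMk (hasDerivAt_id k))
      exact this
    have cG : ContDiff ℝ n (fun z : ℝ × ℝ => G z.1 z.2) := by
      have : ContDiff ℝ n (fderiv ℝ (fun z : ℝ × ℝ => F z.1 z.2)) := hF.fderiv_right (by norm_cast)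
      exact this.clm_apply contDiff_const
    refine nc_contDiff_partials (Y := fun x k => ∫ s in x0..x, F s k) (P := F) (Q := fun x k => ∫ s in x0..x, G s k) n ?_ ?_ (hF.of_le (by norm_cast; simp)) (ih cG)
    · intro x k
      have : Continuous fun s => F s k := hF.continuous.comp (by fun_prop : Continuous fun s : ℝ => (s, k))
      exact this.integral_hasStrictDerivAt x0 x |>.hasDerivAt
    · intro x k
      exact nc_hasDerivAt_param x0 x k hF.continuous cG.continuous hG

theorem nc_exists_global {f : ℝ × ℝ → ℝ} {K L : NNReal} (cf : Continuous f)
    (hL : ∀ z, ‖f z‖ ≤ L) (hK : ∀ x, LipschitzWith K (fun y => f (x, y))) (x0 k : ℝ) :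
    ∃ y : ℝ → ℝ, y x0 = k ∧ ∀ x, HasDerivAt y (f (x, y x)) x := by
  have ex : ∀ T : ℝ, 0 < T → ∃ α : ℝ → ℝ, α x0 = k ∧ ∀ t ∈ Ioo (x0 - T) (x0 + T), HasDerivAt α (f (t, α t)) t := by
    intro T hT
    have hP : IsPicardLindelof (fun x y => f (x, y)) (tmin := x0 - T) (tmax := x0 + T)
        ⟨x0, by constructor <;> linarith⟩ k (L * ⟨T, hT.le⟩) 0 L K := by
      refine ⟨fun t _ => (hK t).lipschitzOnWith, fun y _ => ?_, fun t _ y _ => hL _, ?_⟩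
      · exact (cf.comp (by fun_prop : Continuous fun s : ℝ => (s, y))).continuousOn
      · simp only [add_sub_cancel_left, sub_sub_cancel, max_self, NNReal.coe_zero, sub_zero]
        exact le_of_eq rfl
    obtain ⟨α, h1, h2⟩ := hP.exists_eq_forall_mem_Icc_hasDerivWithinAt₀
    exact ⟨α, h1, fun t ht => (h2 t (Ioo_subset_Icc_self ht)).hasDerivAt (Icc_mem_nhds ht.1 ht.2)⟩
  choose! α h1 h2 using ex
  have uniq : ∀ S T, 0 < S → S ≤ T → ∀ t ∈ Ioo (x0 - S) (x0 + S), α S t = α T t := by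
    intro S T hS hST t ht
    refine ODE_solution_unique_of_mem_Ioo (v := fun x y => f (x, y)) (s := fun _ => univ) (K := K) (t₀ := x0) (a := x0 - S) (b := x0 + S)
      (fun t _ => (hK t).lipschitzOnWith) (by constructor <;> linarith) (fun t ht => ⟨h2 S hS t ht, trivial⟩)
      (fun t ht => ⟨h2 T (by linarith) t ⟨by linarith [ht.1], by linarith [ht.2]⟩, trivial⟩) (by rw [h1 S hS, h1 T (by linarith)]) ht
  refine ⟨fun x => α (|x - x0| + 1) x, by simp [h1], fun x => ?_⟩
  have key : ∀ t ∈ Ioo (x - 1) (x + 1), α (|t - x0| + 1) t = α (|x - x0| + 2) t := by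
    intro t ht
    have : |t - x0| ≤ |x - x0| + 1 := by
      rw [abs_le]; constructor <;> cases abs_cases (x - x0) <;> linarith [ht.1, ht.2]
    refine uniq _ _ (by positivity) (by linarith) t ?_
    constructor <;> cases abs_cases (t - x0) <;> linarith
  have hx := h2 (|x - x0| + 2) (by positivity) x (by constructor <;> cases abs_cases (x - x0) <;> linarith)
  have hxk := key x (by constructor <;> linarith)
  simp only [hxk]
  refine hx.congr_of_eventuallyEq ?_
  filter_upwards [Ioo_mem_nhds (by linarith : x - 1 < x) (by linarith : x < x + 1)] with t ht
  exact key t ht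

theorem nc_flow {f : ℝ × ℝ → ℝ} (cf : ContDiff ℝ ∞ f) (hf : HasCompactSupport f) (x0 : ℝ) :
    ∃ Y Q : ℝ → ℝ → ℝ, (∀ k, Y x0 k = k) ∧ (∀ x k, HasDerivAt (fun x => Y x k) (f (x, Y x k)) x) ∧
      (∀ x k, HasDerivAt (fun k => Y x k) (Q x k) k) ∧ (∀ x k, 0 < Q x k) ∧
      ContDiff ℝ ∞ (fun z : ℝ × ℝ => Y z.1 z.2) ∧ ContDiff ℝ ∞ (fun z : ℝ × ℝ => Q z.1 z.2) := by
  obtain ⟨L, hL⟩ := hf.exists_bound_of_continuous cf.continuous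
  have hd : Differentiable ℝ f := cf.differentiable (by simp)
  set G : ℝ × ℝ → ℝ := fun z => fderiv ℝ f z (0, 1) with hG
  have cG : ContDiff ℝ ∞ G := (cf.fderiv_right (m := ∞) (by norm_cast)).clm_apply contDiff_const
  have sG : HasCompactSupport G := hf.fderiv_apply ℝ _
  obtain ⟨K, hK⟩ := sG.exists_bound_of_continuous cG.continuous
  have hL0 : 0 ≤ L := (norm_nonneg _).trans (hL 0)
  have hK0 : 0 ≤ K := (norm_nonneg _).trans (hK 0)
  have dG : ∀ x y, HasDerivAt (fun y => f (x, y)) (G (x, y)) y := fun x y =>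
    (hd (x, y)).hasFDerivAt.comp_hasDerivAt y ((hasDerivAt_const y x).prodMk (hasDerivAt_id y))
  have lip : ∀ x, LipschitzWith ⟨K, hK0⟩ (fun y => f (x, y)) := fun x =>
    lipschitzWith_of_nnnorm_deriv_le (fun y => (dG x y).differentiableAt)
      (fun y => by rw [(dG x y).deriv]; exact hK _)
  have ex := fun k => nc_exists_global (L := ⟨L, hL0⟩) cf.continuous hL lip x0 k
  choose y hy0 hy using ex
  -- difference quotient
  set h : ℝ × ℝ × ℝ → ℝ := fun w => ∫ θ in (0:ℝ)..1, G (w.1, w.2.1 + θ * (w.2.2 - w.2.1)) with hh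
  have ch : Continuous h := by
    apply intervalIntegral.continuous_parametric_intervalIntegral_of_continuous'
    exact cG.continuous.comp (by fun_prop)
  have hh1 : ∀ x a b, f (x, b) - f (x, a) = h (x, a, b) * (b - a) := by
    intro x a b
    have : ∀ θ ∈ uIcc (0:ℝ) 1, HasDerivAt (fun θ => f (x, a + θ * (b - a))) (G (x, a + θ * (b - a)) * (b - a)) θ := by
      intro θ _
      have := (dG x (a + θ * (b - a))).comp θ (((hasDerivAt_id θ).mul_const (b - a)).const_add a)
      exact this.congr_deriv (by simp)
    have h3 := intervalIntegral.integral_eq_sub_of_hasDerivAt this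
      ((Continuous.mul (cG.continuous.comp (by fun_prop)) continuous_const).intervalIntegrable _ _)
    rw [intervalIntegral.integral_mul_const] at h3
    simp only [hh]
    rw [h3]; simp
  have hh2 : ∀ x a, h (x, a, a) = G (x, a) := by intro x a; simp [hh]
  have hhK : ∀ w, |h w| ≤ K := by
    intro w
    have := intervalIntegral.norm_integral_le_of_norm_le_const (a := 0) (b := 1) (C := K) (f := fun θ => G (w.1, w.2.1 + θ * (w.2.2 - w.2.1))) (fun _ _ => hK _)
    simpa [hh] using this
  have cy : ∀ k, Continuous (y k) := fun k => continuous_iff_continuousAt.2 fun x => (hy k x).continuousAt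
  have chy : ∀ k l, Continuous fun s => h (s, y k s, y l s) := fun k l =>
    ch.comp (continuous_id.prodMk ((cy k).prodMk (cy l)))
  have formula : ∀ k l x, y l x - y k x = (l - k) * Real.exp (∫ s in x0..x, h (s, y k s, y l s)) := by
    intro k l x
    set I : ℝ → ℝ := fun x => ∫ s in x0..x, h (s, y k s, y l s) with hI
    have dI : ∀ x, HasDerivAt I (h (x, y k x, y l x)) x := fun x =>
      ((chy k l).integral_hasStrictDerivAt x0 x).hasDerivAt
    have dE : ∀ x, HasDerivAt (fun x => (y l x - y k x) * Real.exp (-I x)) 0 x := by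
      intro x
      have := ((hy l x).sub (hy k x)).mul (dI x).neg.exp
      refine this.congr_deriv ?_
      rw [hh1]; simp; ring
    have hc := is_const_of_deriv_eq_zero (fun x => (dE x).differentiableAt) (fun x => (dE x).deriv) x x0
    have hI0 : I x0 = 0 := by simp [hI]
    simp only [hI0, hy0, neg_zero, Real.exp_zero, mul_one] at hc
    have hee : Real.exp (-I x) * Real.exp (I x) = 1 := by rw [← Real.exp_add]; simp
    change _ = (l - k) * Real.exp (I x)
    rw [← hc, mul_assoc, hee, mul_one]
  -- joint continuity
  have bd : ∀ k l x, |y l x - y k x| ≤ |l - k| * Real.exp (K * |x - x0|) := by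
    intro k l x
    rw [formula, abs_mul, Real.abs_exp]
    gcongr
    refine (le_abs_self _).trans ?_
    exact intervalIntegral.norm_integral_le_of_norm_le_const (C := K) (f := fun s => h (s, y k s, y l s)) (fun s _ => hhK (s, y k s, y l s))
  have cY : Continuous (fun z : ℝ × ℝ => y z.2 z.1) := by
    rw [continuous_iff_continuousAt]
    rintro ⟨x, k⟩
    have e : (fun z : ℝ × ℝ => y z.2 z.1) = fun z => y k z.1 + (y z.2 z.1 - y k z.1) := by ext; ring
    rw [e]
    have t2 : Tendsto (fun z : ℝ × ℝ => y z.2 z.1 - y k z.1) (𝓝 (x, k)) (𝓝 0) := by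
      refine squeeze_zero_norm (fun z => bd k z.2 z.1) ?_
      have : Continuous fun z : ℝ × ℝ => |z.2 - k| * Real.exp (K * |z.1 - x0|) := by fun_prop
      simpa using this.tendsto (x, k)
    have t1 : Tendsto (fun z : ℝ × ℝ => y k z.1) (𝓝 (x, k)) (𝓝 (y k x)) :=
      ((cy k).comp continuous_fst).tendsto (x, k)
    have := t1.add t2
    simpa [ContinuousAt] using this
  set Q : ℝ → ℝ → ℝ := fun x k => Real.exp (∫ s in x0..x, G (s, y k s)) with hQ
  have dQ : ∀ x k, HasDerivAt (fun k => y k x) (Q x k) k := by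
    intro x k
    rw [hasDerivAt_iff_tendsto_slope]
    have c1 : Continuous fun l => Real.exp (∫ s in x0..x, h (s, y k s, y l s)) := by
      apply Real.continuous_exp.comp
      apply intervalIntegral.continuous_parametric_intervalIntegral_of_continuous'
      exact ch.comp (continuous_snd.prodMk (((cy k).comp continuous_snd).prodMk (cY.comp (continuous_snd.prodMk continuous_fst))))
    have t := (c1.tendsto k).mono_left (nhdsWithin_le_nhds (s := {k}ᶜ))
    simp only [hh2] at t
    refine t.congr' ?_
    filter_upwards [self_mem_nhdsWithin] with l hl
    have : l - k ≠ 0 := sub_ne_zero.2 hl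
    rw [slope_def_field, formula k l x]
    field_simp
  have smooth : ∀ n : ℕ, ContDiff ℝ n (fun z : ℝ × ℝ => y z.2 z.1) := by
    intro n
    induction n with
    | zero => simpa using cY
    | succ n ih =>
      refine nc_contDiff_partials (Y := fun x k => y k x) (P := fun x k => f (x, y k x)) (Q := Q) n (fun x k => hy k x) dQ ?_ ?_
      · exact (cf.of_le (by exact_mod_cast le_top)).comp (contDiff_fst.prodMk ih)
      · exact Real.contDiff_exp.comp (nc_contDiff_param x0 n (F := fun s k => G (s, y k s)) ((cG.of_le (by exact_mod_cast le_top)).comp (contDiff_fst.prodMk ih)))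
  have smoothI : ContDiff ℝ ∞ (fun z : ℝ × ℝ => y z.2 z.1) := contDiff_infty.2 smooth
  refine ⟨fun x k => y k x, Q, hy0, fun x k => hy k x, dQ, fun x k => Real.exp_pos _, smoothI, ?_⟩
  rw [contDiff_infty]
  intro n
  exact Real.contDiff_exp.comp (nc_contDiff_param x0 n (F := fun s k => G (s, y k s)) ((cG.of_le (by exact_mod_cast le_top)).comp (contDiff_fst.prodMk (smooth n))))

theorem nc_inverse {E : Type*} [NormedAddCommGroup E] [NormedSpace ℝ E] [FiniteDimensional ℝ E]
    [CompleteSpace E]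
    {F : E → E} {N : Set E} (hN : IsOpen N) (hF : ContDiffOn ℝ ∞ F N)
    (hinj : ∀ z ∈ N, Function.Injective (fderiv ℝ F z)) {z0 : E} (hz0 : z0 ∈ N) :
    ∃ (M : Set E) (h : E → E), IsOpen M ∧ F z0 ∈ M ∧ ContDiffOn ℝ ∞ h M ∧ MapsTo h M N ∧
      h (F z0) = z0 ∧ (∀ w ∈ M, F (h w) = w) ∧
      (∀ w ∈ M, ∀ v, fderiv ℝ F (h w) (fderiv ℝ h w v) = v) := by
  have hd : ∀ z ∈ N, ∃ e : E ≃L[ℝ] E, HasFDerivAt F (e : E →L[ℝ] E) z := by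
    intro z hz
    refine ⟨(LinearEquiv.ofInjectiveEndo (fderiv ℝ F z : E →ₗ[ℝ] E) (hinj z hz)).toContinuousLinearEquiv, ?_⟩
    have h1 := ((hF.contDiffAt (hN.mem_nhds hz)).differentiableAt (by simp)).hasFDerivAt
    refine h1.congr_fderiv ?_
    ext v
    rfl
  obtain ⟨e, he⟩ := hd z0 hz0
  have hc := hF.contDiffAt (hN.mem_nhds hz0)
  set H := hc.toOpenPartialHomeomorph F he (by simp) with hH
  have Hcoe : (H : E → E) = F := rfl
  have hs : z0 ∈ H.source := hc.mem_toOpenPartialHomeomorph_source he (by simp)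
  have hM : IsOpen (H.target ∩ H.symm ⁻¹' N) := H.symm.isOpen_inter_preimage hN
  have hsm : ContDiffOn ℝ ∞ H.symm (H.target ∩ H.symm ⁻¹' N) := by
    rintro w ⟨hw, hwN⟩
    obtain ⟨e', he'⟩ := hd _ hwN
    exact (H.contDiffAt_symm hw he' (hF.contDiffAt (hN.mem_nhds hwN))).contDiffWithinAt
  have hsymm : H.symm (F z0) = z0 := H.left_inv hs
  have hri : ∀ w ∈ H.target ∩ H.symm ⁻¹' N, F (H.symm w) = w := fun w hw => H.right_inv hw.1
  refine ⟨_, H.symm, hM, ⟨H.map_source hs, ?_⟩, hsm, fun w hw => hw.2, hsymm, hri, ?_⟩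
  · change H.symm (F z0) ∈ N
    rw [hsymm]; exact hz0
  · intro w hw v
    have d1 := ((hsm.contDiffAt (hM.mem_nhds hw)).differentiableAt (by simp)).hasFDerivAt
    have d2 := ((hF.contDiffAt (hN.mem_nhds hw.2)).differentiableAt (by simp)).hasFDerivAt
    have d3 := d2.comp w d1
    have d4 : HasFDerivAt (F ∘ H.symm) (ContinuousLinearMap.id ℝ E) w := by
      refine (hasFDerivAt_id w).congr_of_eventuallyEq ?_
      filter_upwards [hM.mem_nhds hw] with w' hw'
      exact hri w' hw'
    exact congrArg (fun L : E →L[ℝ] E => L v) (d3.unique d4)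

theorem nc_first_integral {f : ℝ × ℝ → ℝ} (cf : ContDiff ℝ ∞ f) (hf : HasCompactSupport f)
    (z0 : ℝ × ℝ) : ∃ (N : Set (ℝ × ℝ)) (u : ℝ × ℝ → ℝ), IsOpen N ∧ z0 ∈ N ∧ ContDiffOn ℝ ∞ u N ∧
      ∀ z ∈ N, fderiv ℝ u z (1, f z) = 0 ∧ 0 < fderiv ℝ u z (0, 1) := by
  obtain ⟨Y, Q, hY0, hYx, hYk, hQ, cY, cQ⟩ := nc_flow cf hf z0.1
  set F : ℝ × ℝ → ℝ × ℝ := fun z => (z.1, Y z.1 z.2) with hFdef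
  have cF : ContDiff ℝ ∞ F := contDiff_fst.prodMk cY
  have dF : ∀ z, HasFDerivAt F ((ContinuousLinearMap.fst ℝ ℝ ℝ).prod
      (f (z.1, Y z.1 z.2) • ContinuousLinearMap.fst ℝ ℝ ℝ + Q z.1 z.2 • ContinuousLinearMap.snd ℝ ℝ ℝ)) z := by
    intro z
    refine hasFDerivAt_fst.prodMk (nc_fderiv_partials (P := fun x k => f (x, Y x k)) hYx hYk ?_ cQ.continuous z)
    exact cf.continuous.comp (continuous_fst.prodMk cY.continuous)
  have dF' : ∀ z v, fderiv ℝ F z v = (v.1, f (F z) * v.1 + Q z.1 z.2 * v.2) := by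
    intro z v; rw [(dF z).fderiv]; simp [hFdef]
  have hinj : ∀ z ∈ (univ : Set (ℝ × ℝ)), Function.Injective (fderiv ℝ F z) := by
    intro z _
    rw [injective_iff_map_eq_zero]
    intro v hv
    rw [dF'] at hv
    have h1 := congrArg Prod.fst hv
    have h2 := congrArg Prod.snd hv
    simp only [Prod.fst_zero, Prod.snd_zero] at h1 h2
    rw [h1] at h2
    have := (hQ z.1 z.2).ne'
    ext
    · exact h1
    · simpa [this] using h2
  obtain ⟨M, h, hM, hzM, ch, -, -, hr, hD⟩ := nc_inverse isOpen_univ cF.contDiffOn hinj (mem_univ z0)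
  have hFz : F z0 = z0 := by simp [hFdef, hY0]
  rw [hFz] at hzM
  refine ⟨M, fun w => (h w).2, hM, hzM, contDiff_snd.comp_contDiffOn ch, ?_⟩
  intro w hw
  have d1 := ((ch.contDiffAt (hM.mem_nhds hw)).differentiableAt (by simp)).hasFDerivAt
  have d2 : ∀ v, fderiv ℝ (fun w => (h w).2) w v = (fderiv ℝ h w v).2 := by
    intro v; rw [d1.snd.fderiv]; simp
  rw [d2, d2]
  have e1 := hD w hw (1, f w)
  have e2 := hD w hw (0, 1)
  rw [dF', hr w hw, Prod.ext_iff] at e1 e2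
  have q := hQ (h w).1 (h w).2
  simp only at e1 e2
  obtain ⟨e11, e12⟩ := e1
  obtain ⟨e21, e22⟩ := e2
  rw [e11] at e12
  rw [e21] at e22
  constructor
  · have : Q (h w).1 (h w).2 * (fderiv ℝ h w (1, f w)).2 = 0 := by linarith
    simpa [q.ne'] using this
  · have : Q (h w).1 (h w).2 * (fderiv ℝ h w (0, 1)).2 = 1 := by linarith
    by_contra hneg
    nlinarith

theorem nc_first_integral' {m : (Fin 2 → ℝ) → ℝ} {W : Set (Fin 2 → ℝ)} (hW : IsOpen W)
    (cm : ContDiffOn ℝ ∞ m W) {p : Fin 2 → ℝ} (hp : p ∈ W) :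
    ∃ (N : Set (Fin 2 → ℝ)) (u : (Fin 2 → ℝ) → ℝ), IsOpen N ∧ p ∈ N ∧ N ⊆ W ∧ ContDiffOn ℝ ∞ u N ∧
      ∀ z ∈ N, fderiv ℝ u z ![1, m z] = 0 ∧ 0 < fderiv ℝ u z ![0, 1] := by
  set e : (ℝ × ℝ) ≃L[ℝ] (Fin 2 → ℝ) := (ContinuousLinearEquiv.finTwoArrow ℝ ℝ).symm with he
  have e1 : ∀ z, e z = ![z.1, z.2] := fun z => by simp [he]
  have hW' : IsOpen (e ⁻¹' W) := hW.preimage e.continuous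
  have hp' : e.symm p ∈ e ⁻¹' W := by simpa using hp
  obtain ⟨ε, hε, hball⟩ := Metric.nhds_basis_closedBall.mem_iff.1 (hW'.mem_nhds hp')
  let χ : ContDiffBump (e.symm p) := ⟨ε / 2, ε, by positivity, by linarith⟩
  have cme : ContDiffOn ℝ ∞ (fun z => m (e z)) (e ⁻¹' W) := cm.comp e.contDiff.contDiffOn (fun z hz => hz)
  set f : ℝ × ℝ → ℝ := fun z => χ z * m (e z) with hf
  have sf : HasCompactSupport f := χ.hasCompactSupport.mul_right
  have cf : ContDiff ℝ ∞ f := by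
    rw [contDiff_iff_contDiffAt]
    intro z
    by_cases hz : z ∉ tsupport f
    · exact contDiffAt_const.congr_of_eventuallyEq (notMem_tsupport_iff_eventuallyEq.1 hz)
    rw [not_not] at hz
    have hz' : z ∈ e ⁻¹' W := by
      apply hball
      have : tsupport f ⊆ tsupport χ := tsupport_mul_subset_left
      have h2 := this hz
      rwa [χ.tsupport_eq] at h2
    exact χ.contDiffAt.mul (cme.contDiffAt (hW'.mem_nhds hz'))
  obtain ⟨N, u, hN, hzN, cu, hu⟩ := nc_first_integral cf sf (e.symm p)
  have hO : IsOpen (N ∩ Metric.ball (e.symm p) (ε / 2)) := hN.inter Metric.isOpen_ball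
  refine ⟨e.symm ⁻¹' (N ∩ Metric.ball (e.symm p) (ε / 2)), fun z => u (e.symm z), hO.preimage e.symm.continuous, ⟨hzN, Metric.mem_ball_self (by positivity)⟩, ?_, ?_, ?_⟩
  · intro z hz
    have : e.symm z ∈ e ⁻¹' W := hball (Metric.ball_subset_closedBall (Metric.ball_subset_ball (by linarith) hz.2))
    simpa using this
  · exact cu.comp e.symm.contDiff.contDiffOn (fun z hz => hz.1)
  · intro z hz
    have d1 := ((cu.contDiffAt (hN.mem_nhds hz.1)).differentiableAt (by simp)).hasFDerivAt
    have d2 := d1.comp z e.symm.hasFDerivAt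
    have d3 : ∀ a b, fderiv ℝ (fun z => u (e.symm z)) z ![a, b] = fderiv ℝ u (e.symm z) (a, b) := by
      intro a b
      have : e.symm ![a, b] = (a, b) := by rw [← e1 (a, b)]; simp
      rw [← this]
      exact congrArg (fun L : (Fin 2 → ℝ) →L[ℝ] ℝ => L ![a, b]) d2.fderiv
    have hf1 : f (e.symm z) = m z := by
      have : χ (e.symm z) = 1 := χ.one_of_mem_closedBall (Metric.ball_subset_closedBall hz.2)
      simp [hf, this]
    have := hu _ hz.1
    rw [hf1] at this
    rw [d3, d3]; exact this

theorem nc_core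
    (U : Set (Fin 2 → ℝ)) (hU : IsOpen U)
    (g : (Fin 2 → ℝ) → Matrix (Fin 2) (Fin 2) ℝ)
    (hg : ∀ i j, ContDiffOn ℝ (⊤ : ℕ∞) (fun p => g p i j) U)
    (hsym : ∀ p ∈ U, (g p).IsSymm)
    (hdet : ∀ p ∈ U, (g p).det < 0) (p : Fin 2 → ℝ) (hp : p ∈ U) (hc : g p 1 1 < 0) :
    ∃ (V : Set (Fin 2 → ℝ)) (q : Fin 2 → ℝ)
      (φ : (Fin 2 → ℝ) → (Fin 2 → ℝ)) (μ : (Fin 2 → ℝ) → ℝ),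
      IsOpen V ∧ q ∈ V ∧ φ q = p ∧ Set.MapsTo φ V U ∧ Set.InjOn φ V ∧
      ContDiffOn ℝ (⊤ : ℕ∞) φ V ∧ ContDiffOn ℝ (⊤ : ℕ∞) μ V ∧
      (∀ w ∈ V, 0 < μ w) ∧ (∀ w ∈ V, (Dmat φ w).det ≠ 0) ∧
      (∀ w ∈ V, (Dmat φ w).transpose * g (φ w) * Dmat φ w =
        Matrix.of ![![0, -μ w], ![-μ w, 0]]) := by
  set W : Set (Fin 2 → ℝ) := U ∩ (fun z => g z 1 1) ⁻¹' (Iio 0) with hWdef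
  have hW : IsOpen W := (hg 1 1).continuousOn.isOpen_inter_preimage hU isOpen_Iio
  have hpW : p ∈ W := ⟨hp, hc⟩
  have hgW : ∀ i j, ContDiffOn ℝ ∞ (fun p => g p i j) W := fun i j => (hg i j).mono inter_subset_left
  set d : (Fin 2 → ℝ) → ℝ := fun z => g z 0 1 * g z 0 1 - g z 0 0 * g z 1 1 with hddef
  have h10 : ∀ z ∈ W, g z 1 0 = g z 0 1 := fun z hz => (hsym z hz.1).apply 0 1
  have hd0 : ∀ z ∈ W, 0 < d z := by
    intro z hz
    have := hdet z hz.1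
    rw [Matrix.det_fin_two, h10 z hz] at this
    simp only [hddef]; linarith
  have cd : ContDiffOn ℝ ∞ d W := ((hgW 0 1).mul (hgW 0 1)).sub ((hgW 0 0).mul (hgW 1 1))
  have cr : ContDiffOn ℝ ∞ (fun z => √(d z)) W := cd.sqrt (fun z hz => (hd0 z hz).ne')
  have hc0 : ∀ z ∈ W, g z 1 1 ≠ 0 := fun z hz => ne_of_lt hz.2
  have cm1 : ContDiffOn ℝ ∞ (fun z => (-g z 0 1 + √(d z)) / g z 1 1) W := ((hgW 0 1).neg.add cr).div (hgW 1 1) hc0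
  have cm2 : ContDiffOn ℝ ∞ (fun z => (-g z 0 1 - √(d z)) / g z 1 1) W := ((hgW 0 1).neg.sub cr).div (hgW 1 1) hc0
  obtain ⟨N1, u, hN1, hpN1, hN1W, cu, hu⟩ := nc_first_integral' hW cm1 hpW
  obtain ⟨N2, v, hN2, hpN2, hN2W, cv, hv⟩ := nc_first_integral' hW cm2 hpW
  set N := N1 ∩ N2 with hNdef
  have hN : IsOpen N := hN1.inter hN2
  -- algebra of a covector
  have lin : ∀ (L : (Fin 2 → ℝ) →L[ℝ] ℝ) (m : ℝ), L ![1, m] = 0 → ∀ w : Fin 2 → ℝ, L w = L ![0, 1] * (w 1 - m * w 0) := by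
    intro L m hL w
    have : w = w 0 • ![1, m] + (w 1 - m * w 0) • ![0, 1] := by
      ext i; fin_cases i <;> simp; ring
    conv_lhs => rw [this]
    rw [map_add, map_smul, map_smul, hL]; simp [mul_comm]
  set F : (Fin 2 → ℝ) → (Fin 2 → ℝ) := fun z => ![u z, v z] with hFdef
  have cF : ContDiffOn ℝ ∞ F N := by
    rw [contDiffOn_pi]
    intro i; fin_cases i
    · exact cu.mono inter_subset_left
    · exact cv.mono inter_subset_right
  have dF : ∀ z ∈ N, ∀ w, fderiv ℝ F z w = ![fderiv ℝ u z w, fderiv ℝ v z w] := by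
    intro z hz w
    have d1 := ((cu.contDiffAt (hN1.mem_nhds hz.1)).differentiableAt (by simp)).hasFDerivAt
    have d2 := ((cv.contDiffAt (hN2.mem_nhds hz.2)).differentiableAt (by simp)).hasFDerivAt
    have d3 : HasFDerivAt F (ContinuousLinearMap.pi ![fderiv ℝ u z, fderiv ℝ v z]) z := by
      rw [hasFDerivAt_pi']
      intro i; fin_cases i
      · exact d1
      · exact d2
    rw [d3.fderiv]
    ext i; fin_cases i <;> simp
  have hrpos : ∀ z ∈ W, 0 < √(d z) := fun z hz => Real.sqrt_pos.2 (hd0 z hz)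
  have hinj : ∀ z ∈ N, Function.Injective (fderiv ℝ F z) := by
    intro z hz
    rw [injective_iff_map_eq_zero]
    intro w hw
    rw [dF z hz] at hw
    have hzW := hN1W hz.1
    have h1 : fderiv ℝ u z w = 0 := by simpa using congrFun hw 0
    have h2 : fderiv ℝ v z w = 0 := by simpa using congrFun hw 1
    rw [lin _ _ (hu z hz.1).1] at h1
    rw [lin _ _ (hv z hz.2).1] at h2
    have h1' := (mul_eq_zero.1 h1).resolve_left (hu z hz.1).2.ne'
    have h2' := (mul_eq_zero.1 h2).resolve_left (hv z hz.2).2.ne'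
    have h3 : (2 * √(d z)) * w 0 = 0 := by
      have := hc0 z hzW
      field_simp at h1' h2'
      linarith
    have h4 : w 0 = 0 := (mul_eq_zero.1 h3).resolve_left (by have := hrpos z hzW; positivity)
    rw [h4] at h1'
    ext i; fin_cases i
    · exact h4
    · simpa using h1'
  obtain ⟨M, φ, hM, hpM, cφ, hmaps, hφp, hr, hD⟩ := nc_inverse hN cF hinj (z0 := p) ⟨hpN1, hpN2⟩
  have hmW : ∀ w ∈ M, φ w ∈ W := fun w hw => hN1W (hmaps hw).1
  have cD : ∀ i j, ContDiffOn ℝ ∞ (fun w => Dmat φ w i j) M := by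
    intro i j
    have h1 : ContDiffOn ℝ ∞ (fderiv ℝ φ) M := cφ.fderiv_of_isOpen hM (by norm_cast)
    have h2 := h1.clm_apply (contDiffOn_const (c := (Pi.single j 1 : Fin 2 → ℝ)))
    exact contDiffOn_pi.1 h2 i
  have cgφ : ∀ i j, ContDiffOn ℝ ∞ (fun w => g (φ w) i j) M := fun i j => (hgW i j).comp cφ hmW
  set μ : (Fin 2 → ℝ) → ℝ := fun w => -(∑ i, ∑ j, Dmat φ w i 0 * g (φ w) i j * Dmat φ w j 1) with hμ
  have cμ : ContDiffOn ℝ ∞ μ M :=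
    (ContDiffOn.sum fun i _ => ContDiffOn.sum fun j _ => ((cD i 0).mul (cgφ i j)).mul (cD j 1)).neg
  have key : ∀ w ∈ M, 0 < μ w ∧ (Dmat φ w).det ≠ 0 ∧ (Dmat φ w).transpose * g (φ w) * Dmat φ w =
        Matrix.of ![![0, -μ w], ![-μ w, 0]] := by
    intro w hw
    have hz := hmaps hw
    have hzW := hmW w hw
    have h0 := hD w hw (Pi.single 0 1)
    have h1 := hD w hw (Pi.single 1 1)
    rw [dF _ hz] at h0 h1
    have a1 := congrFun h0 0
    have a2 := congrFun h0 1
    have a3 := congrFun h1 0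
    have a4 := congrFun h1 1
    simp only [Matrix.cons_val_zero, Matrix.cons_val_one, Pi.single_eq_same, ne_eq, one_ne_zero, zero_ne_one, not_false_eq_true, Pi.single_eq_of_ne] at a1 a2 a3 a4
    rw [lin _ _ (hu _ hz.1).1] at a1 a3
    rw [lin _ _ (hv _ hz.2).1] at a2 a4
    have hA := (hu _ hz.1).2
    have hB := (hv _ hz.2).2
    have hdd : d (φ w) = g (φ w) 0 1 * g (φ w) 0 1 - g (φ w) 0 0 * g (φ w) 1 1 := rfl
    have hrr := Real.mul_self_sqrt (hd0 _ hzW).le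
    have hr0 := hrpos _ hzW
    have hc1 : g (φ w) 1 1 < 0 := hzW.2
    have hs := h10 _ hzW
    have D00 : fderiv ℝ φ w (Pi.single 0 1) 0 = Dmat φ w 0 0 := rfl
    have D10 : fderiv ℝ φ w (Pi.single 0 1) 1 = Dmat φ w 1 0 := rfl
    have D01 : fderiv ℝ φ w (Pi.single 1 1) 0 = Dmat φ w 0 1 := rfl
    have D11 : fderiv ℝ φ w (Pi.single 1 1) 1 = Dmat φ w 1 1 := rfl
    rw [D00, D10] at a1 a2
    rw [D01, D11] at a3 a4
    rw [hdd] at hrr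
    simp only [hμ, Fin.sum_univ_two, hs]
    have hμ' : (Dmat φ w).transpose * g (φ w) * Dmat φ w = Matrix.of ![![
       g (φ w) 0 0 * Dmat φ w 0 0 ^2 + 2 * g (φ w) 0 1 * Dmat φ w 0 0 * Dmat φ w 1 0 + g (φ w) 1 1 * Dmat φ w 1 0 ^ 2,
       (Dmat φ w 0 0 * g (φ w) 0 0 * Dmat φ w 0 1 + Dmat φ w 0 0 * g (φ w) 0 1 * Dmat φ w 1 1 +
        (Dmat φ w 1 0 * g (φ w) 0 1 * Dmat φ w 0 1 + Dmat φ w 1 0 * g (φ w) 1 1 * Dmat φ w 1 1))],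
       ![(Dmat φ w 0 0 * g (φ w) 0 0 * Dmat φ w 0 1 + Dmat φ w 0 0 * g (φ w) 0 1 * Dmat φ w 1 1 +
        (Dmat φ w 1 0 * g (φ w) 0 1 * Dmat φ w 0 1 + Dmat φ w 1 0 * g (φ w) 1 1 * Dmat φ w 1 1)),
       g (φ w) 0 0 * Dmat φ w 0 1 ^2 + 2 * g (φ w) 0 1 * Dmat φ w 0 1 * Dmat φ w 1 1 + g (φ w) 1 1 * Dmat φ w 1 1 ^ 2]] := by
      ext i j
      fin_cases i <;> fin_cases j <;> simp [Matrix.mul_apply, Fin.sum_univ_two, hs] <;> ring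
    rw [hμ', Matrix.det_fin_two]
    clear hμ'
    generalize Dmat φ w 0 0 = X0 at *
    generalize Dmat φ w 1 0 = Y0 at *
    generalize Dmat φ w 0 1 = X1 at *
    generalize Dmat φ w 1 1 = Y1 at *
    generalize fderiv ℝ u (φ w) ![0, 1] = A at *
    generalize fderiv ℝ v (φ w) ![0, 1] = B at *
    generalize √(d (φ w)) = r at *
    generalize g (φ w) 0 0 = a at *
    generalize g (φ w) 0 1 = b at *
    generalize g (φ w) 1 1 = c at *
    have hcne : c ≠ 0 := hc1.ne
    have y0 : Y0 = (-b - r) / c * X0 := by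
      have := (mul_eq_zero.1 a2).resolve_left hB.ne'
      linarith
    have y1 : Y1 = (-b + r) / c * X1 := by
      have := (mul_eq_zero.1 a3).resolve_left hA.ne'
      linarith
    subst y0 y1
    have x0 : A * X0 * (-2 * r) = c := by
      field_simp at a1; linarith
    have x1 : B * X1 * (2 * r) = c := by
      field_simp at a4; linarith
    have ha : a = (b * b - r * r) / c := by field_simp; linarith
    have hX : X0 * X1 < 0 := by
      have h5 : (X0 * X1) * (A * B * (4 * r * r)) = -(c * c) := by
        have : (A * X0 * (-2 * r)) * (B * X1 * (2 * r)) = c * c := by rw [x0, x1]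
        linarith
      by_contra hneg
      push Not at hneg
      have : 0 ≤ (X0 * X1) * (A * B * (4 * r * r)) := by positivity
      nlinarith [mul_pos_of_neg_of_neg hc1 hc1]
    refine ⟨?_, ?_, ?_⟩
    · have : -(X0 * a * X1 + X0 * b * ((-b + r) / c * X1) + ((-b - r) / c * X0 * b * X1 + (-b - r) / c * X0 * c * ((-b + r) / c * X1))) = (X0 * X1) * (2 * r ^ 2 / c) := by
        rw [ha]; field_simp; ring
      rw [this]
      exact mul_pos_of_neg_of_neg hX (div_neg_of_pos_of_neg (by positivity) hc1)
    · have : X0 * ((-b + r) / c * X1) - X1 * ((-b - r) / c * X0) = (X0 * X1) * (2 * r / c) := by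
        field_simp; ring
      rw [this]
      exact mul_ne_zero hX.ne (div_ne_zero (by positivity) hcne)
    · rw [neg_neg, ha]
      congr 5
      · field_simp; ring
      · field_simp; ring
  refine ⟨M, F p, φ, μ, hM, hpM, hφp, fun w hw => (hmW w hw).1, ?_, cφ, cμ, fun w hw => (key w hw).1, fun w hw => (key w hw).2.1, fun w hw => (key w hw).2.2⟩
  intro w hw w' hw' h
  rw [← hr w hw, ← hr w' hw', h]

theorem nc_exists_P (A : Matrix (Fin 2) (Fin 2) ℝ) (hs : A.IsSymm) (hd : A.det < 0) :
    ∃ P : Matrix (Fin 2) (Fin 2) ℝ, P.det ≠ 0 ∧ (P.transpose * A * P) 1 1 < 0 := by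
  have h10 : A 1 0 = A 0 1 := hs.apply 0 1
  rw [Matrix.det_fin_two, h10] at hd
  have red : ∀ t : ℝ, A 0 0 + 2 * A 0 1 * t + A 1 1 * t ^ 2 < 0 →
      ∃ P : Matrix (Fin 2) (Fin 2) ℝ, P.det ≠ 0 ∧ (P.transpose * A * P) 1 1 < 0 := by
    intro t ht
    refine ⟨!![0, 1; 1, t], by simp [Matrix.det_fin_two], ?_⟩
    simp [Matrix.mul_apply, Fin.sum_univ_two, h10]
    linarith
  rcases lt_trichotomy (A 1 1) 0 with h | h | h
  · exact ⟨1, by simp, by simpa using h⟩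
  · have hb : A 0 1 ≠ 0 := by
      intro hb; rw [h, hb] at hd; simp at hd
    refine red (-(A 0 0 + 1) / (2 * A 0 1)) ?_
    have : A 0 0 + 2 * A 0 1 * (-(A 0 0 + 1) / (2 * A 0 1)) = -1 := by field_simp; ring
    rw [h, this]; norm_num
  · refine red (-A 0 1 / A 1 1) ?_
    have : A 0 0 + 2 * A 0 1 * (-A 0 1 / A 1 1) + A 1 1 * (-A 0 1 / A 1 1) ^ 2
      = (A 0 0 * A 1 1 - A 0 1 * A 0 1) / A 1 1 := by field_simp; ring
    rw [this]
    exact div_neg_of_neg_of_pos hd h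

end NullCoordHelpers

/-- Existence of null coordinates on a Lorentzian surface: for a smooth Lorentzian
metric `g` (symmetric with negative determinant) on an open set `U ⊆ ℝ²` and any
`p ∈ U`, there is a smooth injective reparametrization `φ : V → U` with everywhere
invertible derivative, sending some `q ∈ V` to `p`, in which the pulled-back metric
takes the form `[[0, -μ], [-μ, 0]]` with `μ > 0` smooth. -/
theorem exists_null_coordinates
    (U : Set (Fin 2 → ℝ)) (hU : IsOpen U)
    (g : (Fin 2 → ℝ) → Matrix (Fin 2) (Fin 2) ℝ)
    (hg : ∀ i j, ContDiffOn ℝ (⊤ : ℕ∞) (fun p => g p i j) U)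
    (hsym : ∀ p ∈ U, (g p).IsSymm)
    (hdet : ∀ p ∈ U, (g p).det < 0) :
    ∀ p ∈ U, ∃ (V : Set (Fin 2 → ℝ)) (q : Fin 2 → ℝ)
      (φ : (Fin 2 → ℝ) → (Fin 2 → ℝ)) (μ : (Fin 2 → ℝ) → ℝ),
      IsOpen V ∧ q ∈ V ∧ φ q = p ∧ Set.MapsTo φ V U ∧ Set.InjOn φ V ∧
      ContDiffOn ℝ (⊤ : ℕ∞) φ V ∧ ContDiffOn ℝ (⊤ : ℕ∞) μ V ∧
      (∀ w ∈ V, 0 < μ w) ∧ (∀ w ∈ V, (Dmat φ w).det ≠ 0) ∧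
      (∀ w ∈ V, (Dmat φ w).transpose * g (φ w) * Dmat φ w =
        Matrix.of ![![0, -μ w], ![-μ w, 0]]) := by
  intro p hp
  obtain ⟨P, hP, hneg⟩ := nc_exists_P (g p) (hsym p hp) (hdet p hp)
  have hPu : IsUnit P.det := isUnit_iff_ne_zero.2 hP
  set T : (Fin 2 → ℝ) →L[ℝ] (Fin 2 → ℝ) := LinearMap.toContinuousLinearMap (Matrix.toLin' P) with hT
  have hTa : ∀ x, T x = P.mulVec x := fun x => by simp [hT]
  have hTinv : ∀ x, T (P⁻¹.mulVec x) = x := by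
    intro x; rw [hTa, Matrix.mulVec_mulVec, Matrix.mul_nonsing_inv _ hPu, Matrix.one_mulVec]
  have hTinj : Function.Injective T := by
    intro x y hxy
    rw [hTa, hTa] at hxy
    have := congrArg (P⁻¹.mulVec) hxy
    rwa [Matrix.mulVec_mulVec, Matrix.mulVec_mulVec, Matrix.nonsing_inv_mul _ hPu,
      Matrix.one_mulVec, Matrix.one_mulVec] at this
  obtain ⟨V, q, φ, μ, hV, hq, hφq, hmaps, hinj, cφ, cμ, hμ, hdetφ, hpull⟩ :=
    nc_core (T ⁻¹' U) (hU.preimage T.continuous) (fun x => P.transpose * g (T x) * P)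
      (by
        intro i j
        have cg : ∀ i j, ContDiffOn ℝ (⊤ : ℕ∞) (fun x => g (T x) i j) (T ⁻¹' U) := fun i j =>
          (hg i j).comp T.contDiff.contDiffOn (fun x hx => hx)
        simp only [Matrix.mul_apply, Fin.sum_univ_two, Matrix.transpose_apply]
        exact (((contDiffOn_const.mul (cg _ _)).add (contDiffOn_const.mul (cg _ _))).mul contDiffOn_const).add
          (((contDiffOn_const.mul (cg _ _)).add (contDiffOn_const.mul (cg _ _))).mul contDiffOn_const))
      (by
        intro x hx
        have := (hsym _ hx).eq
        simp [Matrix.IsSymm, Matrix.transpose_mul, this, Matrix.mul_assoc])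
      (by
        intro x hx
        have := hdet _ hx
        rw [Matrix.det_mul, Matrix.det_mul, Matrix.det_transpose]
        have h2 : 0 < P.det * P.det := mul_self_pos.2 hP
        nlinarith)
      (P⁻¹.mulVec p) (by rw [Set.mem_preimage, hTinv]; exact hp) (by simpa only [hTinv] using hneg)
  have hDm : ∀ w ∈ V, Dmat (fun w => T (φ w)) w = P * Dmat φ w := by
    intro w hw
    have d1 := ((cφ.contDiffAt (hV.mem_nhds hw)).differentiableAt (by simp)).hasFDerivAt
    have d2 := T.hasFDerivAt.comp w d1
    ext i j
    have : fderiv ℝ (fun w => T (φ w)) w (Pi.single j 1) = T (fderiv ℝ φ w (Pi.single j 1)) :=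
      congrArg (fun L : (Fin 2 → ℝ) →L[ℝ] (Fin 2 → ℝ) => L (Pi.single j 1)) d2.fderiv
    rw [hTa] at this
    simp only [Dmat, Matrix.of_apply, this, Matrix.mul_apply]
    rfl
  refine ⟨V, q, fun w => T (φ w), μ, hV, hq, by simp only [hφq, hTinv], fun w hw => hmaps hw,
    fun w hw w' hw' h => hinj hw hw' (hTinj h), T.contDiff.comp_contDiffOn cφ, cμ, hμ, ?_, ?_⟩
  · intro w hw
    rw [hDm w hw, Matrix.det_mul]
    exact mul_ne_zero hP (hdetφ w hw)
  · intro w hw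
    rw [hDm w hw, ← hpull w hw, Matrix.transpose_mul]
    simp only [Matrix.mul_assoc]
end

section
/- Laplacian of the Gauss map of a minimal Lorentzian surface (Lemma 3.1, explicit form): in the setting of a minimal Lorentzian surface x(s,t) = α(s) + β(t) in null coordinates, the Gauss map ν = (1/m²)·(α'(s) ∧ β'(t)) satisfies, at every point, (2/m²)·∂²ν/∂s∂t = (2·B(η₁,η₂)/m⁴)·ν + (2/m⁴)·(η₁ ∧ η₂). (This is the identity Δν = 2Kν + 2K^Dμ, where K = B(η₁,η₂)/m⁴ is the Gaussian curvature and K^Dμ = (1/m⁴)·η₁∧η₂ encodes the normal curvature.) -/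
noncomputable section

/-- The Minkowski bilinear form on `ℝ⁴ = Fin 4 → ℝ`:
`B(v,w) = -v₀w₀ + v₁w₁ + v₂w₂ + v₃w₃`. -/
def B4 (v w : Fin 4 → ℝ) : ℝ :=
  -(v 0 * w 0) + v 1 * w 1 + v 2 * w 2 + v 3 * w 3

/-- The wedge product `v ∧ w`, modelled concretely as the antisymmetric array
`(i,j) ↦ vᵢwⱼ - vⱼwᵢ` (a faithful model of the second exterior power `Λ²(ℝ⁴)`). -/
def wedge (v w : Fin 4 → ℝ) : Fin 4 → Fin 4 → ℝ :=
  fun i j => v i * w j - v j * w i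

/-- Partial derivative of a two-parameter map with respect to the first variable. -/
def pds {E : Type*} [NormedAddCommGroup E] [NormedSpace ℝ E]
    (x : ℝ → ℝ → E) (s t : ℝ) : E :=
  deriv (fun u => x u t) s

/-- Partial derivative of a two-parameter map with respect to the second variable. -/
def pdt {E : Type*} [NormedAddCommGroup E] [NormedSpace ℝ E]
    (x : ℝ → ℝ → E) (s t : ℝ) : E :=
  deriv (fun u => x s u) t

/-- `m²(s,t) = -B(α'(s), β'(t))`, the conformal factor of the induced metric
`-m²(ds⊗dt + dt⊗ds)` of the minimal Lorentzian surface `x(s,t) = α(s) + β(t)`. -/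
def msq (α β : ℝ → Fin 4 → ℝ) (s t : ℝ) : ℝ :=
  -B4 (deriv α s) (deriv β t)

/-- `η₁ = h(∂s,∂s)`: the component of `x_{ss} = α''` orthogonal to the tangent
plane `span{α'(s), β'(t)}`. -/
def eta1 (α β : ℝ → Fin 4 → ℝ) (s t : ℝ) : Fin 4 → ℝ :=
  deriv (deriv α) s
    - (B4 (deriv (deriv α) s) (deriv β t) / B4 (deriv α s) (deriv β t)) • deriv α s

/-- `η₂ = h(∂t,∂t)`: the component of `x_{tt} = β''` orthogonal to the tangent
plane `span{α'(s), β'(t)}`. -/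
def eta2 (α β : ℝ → Fin 4 → ℝ) (s t : ℝ) : Fin 4 → ℝ :=
  deriv (deriv β) t
    - (B4 (deriv (deriv β) t) (deriv α s) / B4 (deriv α s) (deriv β t)) • deriv β t

/-- The Gauss map `ν = (1/m²)·(α'(s) ∧ β'(t))`, valued in (a model of) `Λ²(ℝ⁴)`. -/
def gaussMap (α β : ℝ → Fin 4 → ℝ) (s t : ℝ) : Fin 4 → Fin 4 → ℝ :=
  (1 / msq α β s t) • wedge (deriv α s) (deriv β t)

/-- The Laplace–Beltrami operator of the induced metric `-m²(ds⊗dt + dt⊗ds)`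
(with the sign convention of the paper) acting on `Λ²(ℝ⁴)`-valued maps:
`Δξ = (2/m²)·∂²ξ/∂s∂t`. -/
def lap (α β : ℝ → Fin 4 → ℝ) (ξ : ℝ → ℝ → (Fin 4 → Fin 4 → ℝ)) (s t : ℝ) :
    Fin 4 → Fin 4 → ℝ :=
  (2 / msq α β s t) • pds (pdt ξ) s t

theorem aux_hasDerivAt_deriv (I : Set ℝ) (hI : IsOpen I) (f : ℝ → Fin 4 → ℝ)
    (hf : ContDiffOn ℝ (⊤ : ℕ∞) f I) (s : ℝ) (hs : s ∈ I) (i : Fin 4) :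
    HasDerivAt (fun u => deriv f u i) (deriv (deriv f) s i) s := by
  have h1 : ContDiffOn ℝ 1 (deriv f) I :=
    hf.deriv_of_isOpen hI (by norm_cast)
  have h2 : DifferentiableAt ℝ (deriv f) s :=
    (h1.differentiableOn (by norm_num)).differentiableAt (hI.mem_nhds hs)
  exact (hasDerivAt_pi.1 h2.hasDerivAt) i

theorem aux_B4 (v : ℝ → Fin 4 → ℝ) (v' w : Fin 4 → ℝ) (s : ℝ)
    (hv : ∀ i, HasDerivAt (fun u => v u i) (v' i) s) :
    HasDerivAt (fun u => B4 (v u) w) (B4 v' w) s := by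
  unfold B4
  exact (((((hv 0).mul_const _).neg).add ((hv 1).mul_const _)).add ((hv 2).mul_const _)).add
    ((hv 3).mul_const _)

theorem aux_B4_comm (v w : Fin 4 → ℝ) : B4 v w = B4 w v := by
  unfold B4; ring

theorem aux_B4_expand (a a' b b' : Fin 4 → ℝ) (p q : ℝ) :
    B4 (a' - p • a) (b' - q • b) = B4 a' b' - q * B4 a' b - p * B4 a b' + p * q * B4 a b := by
  simp only [B4, Pi.sub_apply, Pi.smul_apply, smul_eq_mul]; ring

theorem aux_pdt (α β : ℝ → Fin 4 → ℝ) (s t : ℝ)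
    (hb : ∀ i, HasDerivAt (fun u => deriv β u i) (deriv (deriv β) t i) t)
    (hc : B4 (deriv α s) (deriv β t) ≠ 0) :
    pdt (gaussMap α β) s t = fun i j =>
      -(wedge (deriv α s) (deriv (deriv β) t) i j) / B4 (deriv α s) (deriv β t)
      + B4 (deriv α s) (deriv (deriv β) t) * wedge (deriv α s) (deriv β t) i j
        / B4 (deriv α s) (deriv β t) ^ 2 := by
  unfold pdt
  apply HasDerivAt.deriv
  refine hasDerivAt_pi.2 fun i => hasDerivAt_pi.2 fun j => ?_
  have hB : HasDerivAt (fun u => B4 (deriv α s) (deriv β u))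
      (B4 (deriv α s) (deriv (deriv β) t)) t := by
    simp only [aux_B4_comm (deriv α s)]
    exact aux_B4 _ _ _ _ hb
  have hW : HasDerivAt (fun u => wedge (deriv α s) (deriv β u) i j)
      (wedge (deriv α s) (deriv (deriv β) t) i j) t := by
    unfold wedge
    exact ((hb j).const_mul _).sub ((hb i).const_mul _)
  have := (hW.div hB hc).neg
  refine (this.congr_deriv ?_).congr_of_eventuallyEq (Filter.Eventually.of_forall fun u => ?_)
  · field_simp
    ring
  · change (1 / -B4 (deriv α s) (deriv β u)) * wedge (deriv α s) (deriv β u) i j =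
      -(wedge (deriv α s) (deriv β u) i j / B4 (deriv α s) (deriv β u))
    rw [one_div, inv_neg, div_eq_mul_inv]
    ring

/-- Lemma 3.1 (explicit form): for a minimal Lorentzian surface `x = α(s)+β(t)` in
null coordinates, the Gauss map satisfies
`Δν = (2/m²)·∂²ν/∂s∂t = (2·B(η₁,η₂)/m⁴)·ν + (2/m⁴)·(η₁ ∧ η₂)`,
i.e. `Δν = 2Kν + 2K^Dμ`. -/
theorem laplacian_gaussMap_minimal
    (I₁ I₂ : Set ℝ) (hI₁ : IsOpen I₁) (hI₂ : IsOpen I₂)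
    (hI₁' : I₁.OrdConnected) (hI₂' : I₂.OrdConnected)
    (α β : ℝ → Fin 4 → ℝ)
    (hα : ContDiffOn ℝ (⊤ : ℕ∞) α I₁) (hβ : ContDiffOn ℝ (⊤ : ℕ∞) β I₂)
    (hαnull : ∀ s ∈ I₁, B4 (deriv α s) (deriv α s) = 0)
    (hβnull : ∀ t ∈ I₂, B4 (deriv β t) (deriv β t) = 0)
    (hneg : ∀ s ∈ I₁, ∀ t ∈ I₂, B4 (deriv α s) (deriv β t) < 0)
    :
    ∀ s ∈ I₁, ∀ t ∈ I₂,
      (2 / msq α β s t) • pds (pdt (gaussMap α β)) s t =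
        (2 * B4 (eta1 α β s t) (eta2 α β s t) / (msq α β s t) ^ 2) • gaussMap α β s t
          + (2 / (msq α β s t) ^ 2) • wedge (eta1 α β s t) (eta2 α β s t) := by
  intro s hs t ht
  have ha := aux_hasDerivAt_deriv I₁ hI₁ α hα s hs
  have hb := aux_hasDerivAt_deriv I₂ hI₂ β hβ t ht
  have hc := (hneg s hs t ht).ne
  have hev : (fun u => pdt (gaussMap α β) u t) =ᶠ[nhds s] fun u i j =>
      -(wedge (deriv α u) (deriv (deriv β) t) i j) / B4 (deriv α u) (deriv β t)
      + B4 (deriv α u) (deriv (deriv β) t) * wedge (deriv α u) (deriv β t) i j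
        / B4 (deriv α u) (deriv β t) ^ 2 := by
    filter_upwards [hI₁.mem_nhds hs] with u hu
    exact aux_pdt α β u t hb (hneg u hu t ht).ne
  have hW : ∀ (w : Fin 4 → ℝ) (i j : Fin 4), HasDerivAt (fun u => wedge (deriv α u) w i j)
      (wedge (deriv (deriv α) s) w i j) s := by
    intro w i j
    unfold wedge
    exact ((ha i).mul_const _).sub ((ha j).mul_const _)
  have hB := fun w => aux_B4 (deriv α) (deriv (deriv α) s) w s ha
  have key : ∀ i j, HasDerivAt (fun u =>
      -(wedge (deriv α u) (deriv (deriv β) t) i j) / B4 (deriv α u) (deriv β t)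
      + B4 (deriv α u) (deriv (deriv β) t) * wedge (deriv α u) (deriv β t) i j
        / B4 (deriv α u) (deriv β t) ^ 2) _ s := fun i j =>
    ((hW (deriv (deriv β) t) i j).neg.div (hB (deriv β t)) hc).add
      (((hB (deriv (deriv β) t)).mul (hW (deriv β t) i j)).div ((hB (deriv β t)).pow 2)
        (pow_ne_zero 2 hc))
  have key2 : pds (pdt (gaussMap α β)) s t = _ :=
    ((hasDerivAt_pi.2 fun i => hasDerivAt_pi.2 fun j => key i j).congr_of_eventuallyEq hev).deriv
  rw [key2]
  funext i j
  simp only [Pi.add_apply, Pi.smul_apply, smul_eq_mul, Pi.neg_apply, Pi.mul_apply,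
    gaussMap, eta1, eta2, msq, aux_B4_expand]
  rw [aux_B4_comm (deriv (deriv β) t) (deriv α s)]
  generalize B4 (deriv α s) (deriv β t) = c at *
  generalize B4 (deriv (deriv α) s) (deriv β t) = c1
  generalize B4 (deriv α s) (deriv (deriv β) t) = c2
  generalize B4 (deriv (deriv α) s) (deriv (deriv β) t) = c3
  simp only [wedge, Pi.sub_apply, Pi.smul_apply, smul_eq_mul,
    Pi.neg_apply, Pi.mul_apply]
  field_simp
  ring
end
end

section
/- Surfaces of the form x(s,t) = s·η₀ + β(t) (Proposition 3.4, converse direction, and Theorem 3.6 (vi)⟹(iii)): let η₀ ∈ ℝ⁴ with η₀ ≠ 0 and B(η₀,η₀) = 0, and let β : I → ℝ⁴ be a smooth curve on an open interval I with B(β'(t),β'(t)) = 0 and B(η₀, β'(t)) < 0 for all t ∈ I. Define x : ℝ × I → ℝ⁴ by x(s,t) := s·η₀ + β(t) and m²(t) := −B(η₀,β'(t)) > 0. Then: (1) x satisfies the null-coordinate conditions B(x_s,x_s) = 0, B(x_t,x_t) = 0, B(x_s,x_t) < 0 (so x parametrizes a Lorentzian surface in 𝔼⁴₁); (2) x_{ss}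 ≡ 0 and x_{st} ≡ 0, so x is minimal and the second fundamental form annihilates the light-like tangent direction η₀ (the relative null space contains the B-degenerate line ℝ·η₀ of the tangent plane); (3) the Gauss map ν := (1/m²)·(x_s ∧ x_t) = (1/m²(t))·(η₀ ∧ β'(t)) satisfies ∂²ν/∂s∂t ≡ 0, i.e. the Gauss map is harmonic, Δν = 0. -/
noncomputable section

/-- The surface `x(s,t) = s·η₀ + β(t)`. -/
def xfun (η₀ : Fin 4 → ℝ) (β : ℝ → Fin 4 → ℝ) (s t : ℝ) : Fin 4 → ℝ :=
  s • η₀ + β t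

/-- The Gauss map `ν = (1/m²)·(x_s ∧ x_t)` of the surface `x`, where
`m² = -B(x_s, x_t)`. -/
def nuOf (x : ℝ → ℝ → (Fin 4 → ℝ)) (s t : ℝ) : Fin 4 → Fin 4 → ℝ :=
  (1 / (-B4 (pds x s t) (pdt x s t))) • wedge (pds x s t) (pdt x s t)

/-- Proposition 3.4 (converse direction) and Theorem 3.6 (vi)⟹(iii): for a nonzero
light-like vector `η₀` and a null curve `β` with `B(η₀,β'(t)) < 0`, the surface
`x(s,t) = s·η₀ + β(t)` is Lorentzian in null coordinates, minimal with
`x_{ss} ≡ x_{st} ≡ 0` (degenerate relative null direction `η₀`), and its Gauss map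
`ν = (1/m²(t))·(η₀ ∧ β'(t))` is harmonic: `∂²ν/∂s∂t ≡ 0`, i.e. `Δν = 0`. -/
theorem translation_surface_of_null_line_harmonic_gaussMap
    (η₀ : Fin 4 → ℝ) (hη₀ : η₀ ≠ 0) (hη₀null : B4 η₀ η₀ = 0)
    (I : Set ℝ) (hI : IsOpen I) (hI' : I.OrdConnected)
    (β : ℝ → Fin 4 → ℝ) (hβ : ContDiffOn ℝ (⊤ : ℕ∞) β I)
    (hβnull : ∀ t ∈ I, B4 (deriv β t) (deriv β t) = 0)
    (hβneg : ∀ t ∈ I, B4 η₀ (deriv β t) < 0) :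
    (∀ s : ℝ, ∀ t ∈ I,
      B4 (pds (xfun η₀ β) s t) (pds (xfun η₀ β) s t) = 0 ∧
      B4 (pdt (xfun η₀ β) s t) (pdt (xfun η₀ β) s t) = 0 ∧
      B4 (pds (xfun η₀ β) s t) (pdt (xfun η₀ β) s t) < 0) ∧
    (∀ s : ℝ, ∀ t ∈ I,
      pds (pds (xfun η₀ β)) s t = 0 ∧ pds (pdt (xfun η₀ β)) s t = 0) ∧
    (∀ s : ℝ, ∀ t ∈ I,
      nuOf (xfun η₀ β) s t = (1 / (-B4 η₀ (deriv β t))) • wedge η₀ (deriv β t) ∧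
      pds (pdt (nuOf (xfun η₀ β))) s t = 0 ∧
      (2 / (-B4 (pds (xfun η₀ β) s t) (pdt (xfun η₀ β) s t))) •
        pds (pdt (nuOf (xfun η₀ β))) s t = 0) := by
  have h1 : pds (xfun η₀ β) = fun _ _ => η₀ := by
    funext s t
    have h : HasDerivAt (fun u : ℝ => u • η₀ + β t) ((1 : ℝ) • η₀) s :=
      ((hasDerivAt_id s).smul_const η₀).add_const (β t)
    have h2 := h.deriv
    rw [one_smul] at h2
    exact h2
  have h2 : pdt (xfun η₀ β) = fun _ t => deriv β t := by
    funext s t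
    exact deriv_const_add (s • η₀)
  have h3 : nuOf (xfun η₀ β) =
      fun _ t => (1 / (-B4 η₀ (deriv β t))) • wedge η₀ (deriv β t) := by
    funext s t
    simp only [nuOf, h1, h2]
  have h4 : ∀ s t, pds (pdt (nuOf (xfun η₀ β))) s t = 0 := by
    intro s t
    rw [h3]
    exact deriv_const s _
  refine ⟨fun s t ht => ?_, fun s t ht => ?_, fun s t ht => ?_⟩
  · rw [h1, h2]
    exact ⟨hη₀null, hβnull t ht, hβneg t ht⟩
  · rw [h1, h2]
    exact ⟨deriv_const s _, deriv_const s _⟩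
  · refine ⟨by rw [h3], h4 s t, ?_⟩
    rw [h4, smul_zero]
end
end

section
/- Degenerated relative null bundle implies harmonic Gauss map (Theorem 3.6 (iv)⟹(iii)): in the setting of a minimal Lorentzian surface x(s,t) = α(s) + β(t) in null coordinates, if η₁(s,t) = 0 for all (s,t) (i.e. the second fundamental form annihilates the null tangent direction α'(s), so the relative null space contains a degenerate line), then ∂²ν/∂s∂t ≡ 0, i.e. the Gauss map ν is harmonic: Δν = 0. -/
noncomputable section

/-- Theorem 3.6 (iv)⟹(iii): if the relative null bundle is degenerate, i.e.
`η₁ = h(∂s,∂s)` vanishes identically, then the Gauss map is harmonic: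
`∂²ν/∂s∂t ≡ 0`, hence `Δν = 0`. -/
theorem degenerate_relative_null_bundle_implies_harmonic_gaussMap
    (I₁ I₂ : Set ℝ) (hI₁ : IsOpen I₁) (hI₂ : IsOpen I₂)
    (hI₁' : I₁.OrdConnected) (hI₂' : I₂.OrdConnected)
    (α β : ℝ → Fin 4 → ℝ)
    (hα : ContDiffOn ℝ (⊤ : ℕ∞) α I₁) (hβ : ContDiffOn ℝ (⊤ : ℕ∞) β I₂)
    (hαnull : ∀ s ∈ I₁, B4 (deriv α s) (deriv α s) = 0)
    (hβnull : ∀ t ∈ I₂, B4 (deriv β t) (deriv β t) = 0)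
    (hneg : ∀ s ∈ I₁, ∀ t ∈ I₂, B4 (deriv α s) (deriv β t) < 0)
    (hdeg : ∀ s ∈ I₁, ∀ t ∈ I₂, eta1 α β s t = 0) :
    ∀ s ∈ I₁, ∀ t ∈ I₂, pds (pdt (gaussMap α β)) s t = 0 := by
  have hd : ∀ s ∈ I₁, HasDerivAt (deriv α) (deriv (deriv α) s) s := by
    intro s hs
    have h1 : ContDiffOn ℝ 1 (deriv α) I₁ :=
      hα.deriv_of_isOpen hI₁ (by
        have h : ((1 + 1 : ℕ∞)) ≤ ⊤ := le_top
        exact WithTop.coe_le_coe.2 h)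
    exact ((h1.differentiableOn (by norm_num)).differentiableAt (hI₁.mem_nhds hs)).hasDerivAt
  have key : ∀ t ∈ I₂, ∀ s ∈ I₁, HasDerivAt (fun u => gaussMap α β u t) 0 s := by
    intro t ht s hs
    have hc : ∀ i, HasDerivAt (fun u => deriv α u i) (deriv (deriv α) s i) s :=
      hasDerivAt_pi.1 (hd s hs)
    have hne := (hneg s hs t ht).ne
    have hdg := hdeg s hs t ht
    unfold eta1 at hdg
    have hB : HasDerivAt (fun u => msq α β u t) (-B4 (deriv (deriv α) s) (deriv β t)) s := by
      unfold msq B4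
      exact (((((hc 0).mul_const _).neg.add ((hc 1).mul_const _)).add
        ((hc 2).mul_const _)).add ((hc 3).mul_const _)).neg
    have hmne : msq α β s t ≠ 0 := neg_ne_zero.2 hne
    rw [hasDerivAt_pi]; intro i
    rw [hasDerivAt_pi]; intro j
    have hi := congrFun hdg i
    have hj := congrFun hdg j
    simp only [Pi.sub_apply, Pi.smul_apply, smul_eq_mul, Pi.zero_apply] at hi hj
    have hw := (((hc i).mul_const (deriv β t j)).sub ((hc j).mul_const (deriv β t i))).div hB hmne
    have hfun : (fun u => gaussMap α β u t i j) =
        fun u => (deriv α u i * deriv β t j - deriv α u j * deriv β t i) / msq α β u t := by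
      funext u
      simp only [gaussMap, wedge, Pi.smul_apply, smul_eq_mul]
      ring
    rw [hfun]
    refine hw.congr_deriv ?_
    rw [sub_eq_zero] at hi hj
    simp only [Pi.zero_apply]
    rw [hi, hj]
    simp only [msq]
    field_simp
    simp only [Pi.sub_apply]
    ring
  intro s hs t ht
  have hconst : ∀ u ∈ I₁, ∀ v ∈ I₂, gaussMap α β u v = gaussMap α β s v := by
    intro u hu v hv
    exact hI₁.is_const_of_deriv_eq_zero hI₁'.isPreconnected
      (fun w hw => (key v hv w hw).differentiableAt.differentiableWithinAt)
      (fun w hw => (key v hv w hw).deriv) hu hs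
  have hev : (fun u => pdt (gaussMap α β) u t) =ᶠ[nhds s] fun _ => pdt (gaussMap α β) s t := by
    filter_upwards [hI₁.mem_nhds hs] with u hu
    apply Filter.EventuallyEq.deriv_eq
    filter_upwards [hI₂.mem_nhds ht] with v hv
    exact hconst u hu v hv
  unfold pds
  rw [hev.deriv_eq]
  simp
end
end

section
/- Theorem 4.2 (explicit form): in the setting of a minimal Lorentzian surface x(s,t) = α(s) + β(t) in null coordinates with I₁ × I₂ connected, suppose there exists a smooth function f : I₁ × I₂ → ℝ such that Δ(Δν) = f·Δν at every point, where Δξ := (2/m²)·∂²ξ/∂s∂t for Λ²(ℝ⁴)-valued maps ξ. Then: η₁ ∧ η₂ vanishes identically, the function K := B(η₁,η₂)/m⁴ is constant on I₁ × I₂, and Δν = 2K·ν everywhere. In particular f may be taken to be the constant 2K on the set where Δν ≠ 0, and the Gauss map ν is of 1-type (an eigenvector of Δ). -/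
noncomputable section

def Sm {E : Type*} [NormedAddCommGroup E] [NormedSpace ℝ E] (U V : Set ℝ)
    (x : ℝ → ℝ → E) : Prop := ContDiffOn ℝ (⊤ : ℕ∞) (Function.uncurry x) (U ×ˢ V)

section smooth
variable {E : Type*} [NormedAddCommGroup E] [NormedSpace ℝ E] {U V : Set ℝ}

theorem Sm.cda (hU : IsOpen U) (hV : IsOpen V) {x : ℝ → ℝ → E} (h : Sm U V x)
    {s t : ℝ} (hs : s ∈ U) (ht : t ∈ V) : ContDiffAt ℝ (⊤ : ℕ∞) (Function.uncurry x) (s, t) :=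
  h.contDiffAt ((hU.prod hV).mem_nhds ⟨hs, ht⟩)

theorem Sm.hs' (hU : IsOpen U) (hV : IsOpen V) {x : ℝ → ℝ → E} (h : Sm U V x)
    {s t : ℝ} (hs : s ∈ U) (ht : t ∈ V) :
    HasDerivAt (fun u => x u t) (fderiv ℝ (Function.uncurry x) (s, t) (1, 0)) s := by
  have h1 : HasFDerivAt (Function.uncurry x) _ (s, t) :=
    ((h.cda hU hV hs ht).differentiableAt (by simp)).hasFDerivAt
  have h2 : HasDerivAt (fun u : ℝ => (u, t)) ((1 : ℝ), (0 : ℝ)) s :=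
    (hasDerivAt_id s).prodMk (hasDerivAt_const s t)
  exact HasFDerivAt.comp_hasDerivAt s h1 h2

theorem Sm.ht' (hU : IsOpen U) (hV : IsOpen V) {x : ℝ → ℝ → E} (h : Sm U V x)
    {s t : ℝ} (hs : s ∈ U) (ht : t ∈ V) :
    HasDerivAt (fun u => x s u) (fderiv ℝ (Function.uncurry x) (s, t) (0, 1)) t := by
  have h1 : HasFDerivAt (Function.uncurry x) _ (s, t) :=
    ((h.cda hU hV hs ht).differentiableAt (by simp)).hasFDerivAt
  have h2 : HasDerivAt (fun u : ℝ => (s, u)) ((0 : ℝ), (1 : ℝ)) t :=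
    (hasDerivAt_const t s).prodMk (hasDerivAt_id t)
  exact HasFDerivAt.comp_hasDerivAt t h1 h2

theorem Sm.hs (hU : IsOpen U) (hV : IsOpen V) {x : ℝ → ℝ → E} (h : Sm U V x)
    {s t : ℝ} (hs : s ∈ U) (ht : t ∈ V) :
    HasDerivAt (fun u => x u t) (pds x s t) s :=
  (h.hs' hU hV hs ht).differentiableAt.hasDerivAt

theorem Sm.ht (hU : IsOpen U) (hV : IsOpen V) {x : ℝ → ℝ → E} (h : Sm U V x)
    {s t : ℝ} (hs : s ∈ U) (ht : t ∈ V) :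
    HasDerivAt (fun u => x s u) (pdt x s t) t :=
  (h.ht' hU hV hs ht).differentiableAt.hasDerivAt

theorem Sm.congr {x y : ℝ → ℝ → E} (h : Sm U V x)
    (hxy : ∀ s ∈ U, ∀ t ∈ V, y s t = x s t) : Sm U V y :=
  ContDiffOn.congr h (fun z hz => hxy z.1 hz.1 z.2 hz.2)

theorem pds_congr (hU : IsOpen U) {x y : ℝ → ℝ → E}
    (hxy : ∀ s ∈ U, ∀ t ∈ V, x s t = y s t) : ∀ s ∈ U, ∀ t ∈ V, pds x s t = pds y s t := by
  intro s hs t ht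
  apply Filter.EventuallyEq.deriv_eq
  filter_upwards [hU.mem_nhds hs] with u hu using hxy u hu t ht

theorem pdt_congr (hV : IsOpen V) {x y : ℝ → ℝ → E}
    (hxy : ∀ s ∈ U, ∀ t ∈ V, x s t = y s t) : ∀ s ∈ U, ∀ t ∈ V, pdt x s t = pdt y s t := by
  intro s hs t ht
  apply Filter.EventuallyEq.deriv_eq
  filter_upwards [hV.mem_nhds ht] with u hu using hxy s hs u hu

theorem Sm.pds_eq (hU : IsOpen U) (hV : IsOpen V) {x : ℝ → ℝ → E} (h : Sm U V x) :
    ∀ s ∈ U, ∀ t ∈ V, pds x s t = fderiv ℝ (Function.uncurry x) (s, t) (1, 0) :=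
  fun _ hs _ ht => (h.hs' hU hV hs ht).deriv

theorem Sm.pdt_eq (hU : IsOpen U) (hV : IsOpen V) {x : ℝ → ℝ → E} (h : Sm U V x) :
    ∀ s ∈ U, ∀ t ∈ V, pdt x s t = fderiv ℝ (Function.uncurry x) (s, t) (0, 1) :=
  fun _ hs _ ht => (h.ht' hU hV hs ht).deriv

theorem Sm.fd (hU : IsOpen U) (hV : IsOpen V) {x : ℝ → ℝ → E} (h : Sm U V x) (v : ℝ × ℝ) :
    Sm U V (fun s t => fderiv ℝ (Function.uncurry x) (s, t) v) := by
  have h1 : ContDiffOn ℝ (⊤ : ℕ∞) (fderiv ℝ (Function.uncurry x)) (U ×ˢ V) :=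
    ContDiffOn.fderiv_of_isOpen h (hU.prod hV) (by simp)
  exact h1.clm_apply contDiffOn_const

theorem Sm.pds (hU : IsOpen U) (hV : IsOpen V) {x : ℝ → ℝ → E} (h : Sm U V x) :
    Sm U V (pds x) := (h.fd hU hV (1, 0)).congr (h.pds_eq hU hV)

theorem Sm.pdt (hU : IsOpen U) (hV : IsOpen V) {x : ℝ → ℝ → E} (h : Sm U V x) :
    Sm U V (pdt x) := (h.fd hU hV (0, 1)).congr (h.pdt_eq hU hV)

theorem Sm.comm (hU : IsOpen U) (hV : IsOpen V) {x : ℝ → ℝ → E} (h : Sm U V x) :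
    ∀ s ∈ U, ∀ t ∈ V, _root_.pdt (_root_.pds x) s t = _root_.pds (_root_.pdt x) s t := by
  intro s hs t ht
  rw [pdt_congr hV (h.pds_eq hU hV) s hs t ht, pds_congr hU (h.pdt_eq hU hV) s hs t ht]
  have hsym : IsSymmSndFDerivAt ℝ (Function.uncurry x) (s, t) :=
    (h.cda hU hV hs ht).isSymmSndFDerivAt (by
      simp only [minSmoothness_of_isRCLikeNormedField]; exact WithTop.coe_le_coe.2 (le_top : (2 : ℕ∞) ≤ ⊤))
  have h1 : ContDiffAt ℝ (⊤ : ℕ∞) (fderiv ℝ (Function.uncurry x)) (s, t) :=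
    (h.cda hU hV hs ht).fderiv_right (by simp)
  have h2 := (h1.differentiableAt (by simp)).hasFDerivAt
  have ha : HasDerivAt (fun u : ℝ => (u, t)) ((1 : ℝ), (0 : ℝ)) s :=
    (hasDerivAt_id s).prodMk (hasDerivAt_const s t)
  have hb : HasDerivAt (fun u : ℝ => (s, u)) ((0 : ℝ), (1 : ℝ)) t :=
    (hasDerivAt_const t s).prodMk (hasDerivAt_id t)
  have e1 : HasDerivAt (fun u => fderiv ℝ (Function.uncurry x) (u, t))
      (fderiv ℝ (fderiv ℝ (Function.uncurry x)) (s, t) (1, 0)) s :=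
    HasFDerivAt.comp_hasDerivAt s h2 ha
  have e2 : HasDerivAt (fun u => fderiv ℝ (Function.uncurry x) (s, u))
      (fderiv ℝ (fderiv ℝ (Function.uncurry x)) (s, t) (0, 1)) t :=
    HasFDerivAt.comp_hasDerivAt t h2 hb
  have e1' := ((ContinuousLinearMap.apply ℝ E ((0 : ℝ), (1 : ℝ))).hasFDerivAt.comp_hasDerivAt s e1).deriv
  have e2' := ((ContinuousLinearMap.apply ℝ E ((1 : ℝ), (0 : ℝ))).hasFDerivAt.comp_hasDerivAt t e2).deriv
  have e3 := hsym.eq (0, 1) (1, 0)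
  unfold _root_.pds _root_.pdt
  refine Eq.trans e2' (Eq.trans ?_ e1'.symm)
  exact e3

end smooth

theorem const_of_pd {U V : Set ℝ} (hU : IsOpen U) (hV : IsOpen V)
    (hU' : U.OrdConnected) (hV' : V.OrdConnected) {x : ℝ → ℝ → ℂ} (h : Sm U V x)
    (h1 : ∀ s ∈ U, ∀ t ∈ V, pds x s t = 0) (h2 : ∀ s ∈ U, ∀ t ∈ V, pdt x s t = 0) :
    ∀ s ∈ U, ∀ t ∈ V, ∀ s' ∈ U, ∀ t' ∈ V, x s t = x s' t' := by
  intro s hs t ht s' hs' t' ht'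
  have e1 : x s t = x s' t :=
    hU.is_const_of_deriv_eq_zero (f := fun u => x u t) hU'.isPreconnected
      (fun u hu => (h.hs hU hV hu ht).differentiableAt.differentiableWithinAt)
      (fun u hu => h1 u hu t ht) hs hs'
  have e2 : x s' t = x s' t' :=
    hV.is_const_of_deriv_eq_zero (f := fun u => x s' u) hV'.isPreconnected
      (fun u hu => (h.ht hU hV hs' hu).differentiableAt.differentiableWithinAt)
      (fun u hu => h2 s' hs' u hu) ht ht'
  exact e1.trans e2

theorem abstract_main {U V : Set ℝ} (hU : IsOpen U) (hV : IsOpen V)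
    (hU' : U.OrdConnected) (hV' : V.OrdConnected)
    (n1 n2 n3 : ℝ → ℝ → ℂ) (q : ℝ → ℝ → ℂ) (f : ℝ → ℝ → ℝ)
    (h1 : Sm U V n1) (h2 : Sm U V n2) (h3 : Sm U V n3) (hq : Sm U V q)
    (hq0 : ∀ s ∈ U, ∀ t ∈ V, q s t ≠ 0)
    (hn : ∀ s ∈ U, ∀ t ∈ V, n1 s t ^ 2 + n2 s t ^ 2 + n3 s t ^ 2 = 1)
    (hs1 : ∀ s ∈ U, ∀ t ∈ V,
      n2 s t * pds n3 s t - n3 s t * pds n2 s t = Complex.I * pds n1 s t)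
    (hs2 : ∀ s ∈ U, ∀ t ∈ V,
      n3 s t * pds n1 s t - n1 s t * pds n3 s t = Complex.I * pds n2 s t)
    (hs3 : ∀ s ∈ U, ∀ t ∈ V,
      n1 s t * pds n2 s t - n2 s t * pds n1 s t = Complex.I * pds n3 s t)
    (ht1 : ∀ s ∈ U, ∀ t ∈ V,
      n2 s t * pdt n3 s t - n3 s t * pdt n2 s t = - Complex.I * pdt n1 s t)
    (ht2 : ∀ s ∈ U, ∀ t ∈ V,
      n3 s t * pdt n1 s t - n1 s t * pdt n3 s t = - Complex.I * pdt n2 s t)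
    (ht3 : ∀ s ∈ U, ∀ t ∈ V,
      n1 s t * pdt n2 s t - n2 s t * pdt n1 s t = - Complex.I * pdt n3 s t)
    (hL1 : ∀ s ∈ U, ∀ t ∈ V, q s t * pds (pdt (fun s t => q s t * pds (pdt n1) s t)) s t
      = f s t * (q s t * pds (pdt n1) s t))
    (hL2 : ∀ s ∈ U, ∀ t ∈ V, q s t * pds (pdt (fun s t => q s t * pds (pdt n2) s t)) s t
      = f s t * (q s t * pds (pdt n2) s t))
    (hL3 : ∀ s ∈ U, ∀ t ∈ V, q s t * pds (pdt (fun s t => q s t * pds (pdt n3) s t)) s t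
      = f s t * (q s t * pds (pdt n3) s t)) :
    ∃ r : ℝ, ∀ s ∈ U, ∀ t ∈ V, q s t * pds (pdt n1) s t = r * n1 s t ∧
      q s t * pds (pdt n2) s t = r * n2 s t ∧ q s t * pds (pdt n3) s t = r * n3 s t := by
  have hI : Complex.I ^ 2 = -1 := Complex.I_sq
  set I := Complex.I with hIdef
  clear_value I
  set g : ℝ → ℝ → ℂ := fun s t =>
    -(pds n1 s t * pdt n1 s t + pds n2 s t * pdt n2 s t + pds n3 s t * pdt n3 s t) with hg
  have cyc : ∀ x y z : ℝ → ℝ → ℂ, Sm U V x → Sm U V y → Sm U V z →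
      (∀ s ∈ U, ∀ t ∈ V, y s t * pds z s t - z s t * pds y s t = I * pds x s t) →
      (∀ s ∈ U, ∀ t ∈ V, y s t * pdt z s t - z s t * pdt y s t = - I * pdt x s t) →
      ∀ s ∈ U, ∀ t ∈ V, y s t * pds (pdt z) s t - z s t * pds (pdt y) s t = 0 := by
    intro x y z hx hy hz ha hb s hs t ht
    have A := pdt_congr hV ha s hs t ht
    have B := pds_congr hU hb s hs t ht
    have A1 := (((hy.ht hU hV hs ht).mul ((hz.pds hU hV).ht hU hV hs ht)).sub
      ((hz.ht hU hV hs ht).mul ((hy.pds hU hV).ht hU hV hs ht))).deriv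
    have A2 := (((hx.pds hU hV).ht hU hV hs ht).const_mul I).deriv
    have B1 := (((hy.hs hU hV hs ht).mul ((hz.pdt hU hV).hs hU hV hs ht)).sub
      ((hz.hs hU hV hs ht).mul ((hy.pdt hU hV).hs hU hV hs ht))).deriv
    have B2 := (((hx.pdt hU hV).hs hU hV hs ht).const_mul (-I)).deriv
    have A' := A1.symm.trans (A.trans A2)
    have B' := B1.symm.trans (B.trans B2)
    rw [hx.comm hU hV s hs t ht, hy.comm hU hV s hs t ht, hz.comm hU hV s hs t ht] at A'
    linear_combination (1 / 2) * A' + (1 / 2) * B'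
  have c1 := cyc n1 n2 n3 h1 h2 h3 hs1 ht1
  have c2 := cyc n2 n3 n1 h2 h3 h1 hs2 ht2
  have c3 := cyc n3 n1 n2 h3 h1 h2 hs3 ht3
  have dn : ∀ s ∈ U, ∀ t ∈ V,
      n1 s t * pdt n1 s t + n2 s t * pdt n2 s t + n3 s t * pdt n3 s t = 0 := by
    intro s hs t ht
    linear_combination -I * n1 s t * ht1 s hs t ht - I * n2 s t * ht2 s hs t ht
      - I * n3 s t * ht3 s hs t ht + (n1 s t * pdt n1 s t + n2 s t * pdt n2 s t + n3 s t * pdt n3 s t) * hI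
  have dg : ∀ s ∈ U, ∀ t ∈ V, n1 s t * pds (pdt n1) s t + n2 s t * pds (pdt n2) s t
      + n3 s t * pds (pdt n3) s t = g s t := by
    intro s hs t ht
    have A := pds_congr hU (y := fun _ _ => (0 : ℂ)) dn s hs t ht
    have A1 := ((((h1.hs hU hV hs ht).mul ((h1.pdt hU hV).hs hU hV hs ht)).add
      ((h2.hs hU hV hs ht).mul ((h2.pdt hU hV).hs hU hV hs ht))).add
      ((h3.hs hU hV hs ht).mul ((h3.pdt hU hV).hs hU hV hs ht))).deriv
    have A2 : deriv (fun _ : ℝ => (0 : ℂ)) s = 0 := by simp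
    have A' := A1.symm.trans (A.trans A2)
    simp only [hg]
    linear_combination A'
  have e1 : ∀ s ∈ U, ∀ t ∈ V, pds (pdt n1) s t = g s t * n1 s t := by
    intro s hs t ht
    linear_combination -pds (pdt n1) s t * hn s hs t ht + n1 s t * dg s hs t ht
      - n2 s t * c3 s hs t ht + n3 s t * c2 s hs t ht
  have e2 : ∀ s ∈ U, ∀ t ∈ V, pds (pdt n2) s t = g s t * n2 s t := by
    intro s hs t ht
    linear_combination -pds (pdt n2) s t * hn s hs t ht + n2 s t * dg s hs t ht
      - n3 s t * c1 s hs t ht + n1 s t * c3 s hs t ht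
  have e3 : ∀ s ∈ U, ∀ t ∈ V, pds (pdt n3) s t = g s t * n3 s t := by
    intro s hs t ht
    linear_combination -pds (pdt n3) s t * hn s hs t ht + n3 s t * dg s hs t ht
      - n1 s t * c2 s hs t ht + n2 s t * c1 s hs t ht
  have hgS : Sm U V g :=
    ((((h1.pds hU hV).mul (h1.pdt hU hV)).add ((h2.pds hU hV).mul (h2.pdt hU hV))).add
      ((h3.pds hU hV).mul (h3.pdt hU hV))).neg
  set G : ℝ → ℝ → ℂ := fun s t => q s t * g s t with hG
  have hGS : Sm U V G := ContDiffOn.mul hq hgS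
  have hGG : ∀ s t, G s t = q s t * g s t := fun _ _ => rfl
  have hgg : ∀ s t, g s t = -(pds n1 s t * pdt n1 s t + pds n2 s t * pdt n2 s t + pds n3 s t * pdt n3 s t) := fun _ _ => rfl
  clear_value G g
  have expand : ∀ x : ℝ → ℝ → ℂ, Sm U V x →
      (∀ s ∈ U, ∀ t ∈ V, pds (pdt x) s t = g s t * x s t) →
      (∀ s ∈ U, ∀ t ∈ V, q s t * pds (pdt (fun s t => q s t * pds (pdt x) s t)) s t
      = f s t * (q s t * pds (pdt x) s t)) →
      ∀ s ∈ U, ∀ t ∈ V, q s t * (pds (pdt G) s t * x s t + pdt G s t * pds x s t +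
        pds G s t * pdt x s t + G s t * (g s t * x s t)) = f s t * (G s t * x s t) := by
    intro x hx he hL s hs t ht
    have a1 : ∀ s ∈ U, ∀ t ∈ V, q s t * pds (pdt x) s t = G s t * x s t := by
      intro s hs t ht
      rw [he s hs t ht, hGG, mul_assoc]
    have a2 := pdt_congr (U := U) hV a1
    have a3 : ∀ s ∈ U, ∀ t ∈ V, pdt (fun s t => G s t * x s t) s t =
        pdt G s t * x s t + G s t * pdt x s t := fun s hs t ht =>
      ((hGS.ht hU hV hs ht).mul (hx.ht hU hV hs ht)).deriv
    have a4 := pds_congr (V := V) hU (fun s hs t ht => (a2 s hs t ht).trans (a3 s hs t ht)) s hs t ht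
    have a5 := ((((hGS.pdt hU hV).hs hU hV hs ht).mul (hx.hs hU hV hs ht)).add
      ((hGS.hs hU hV hs ht).mul ((hx.pdt hU hV).hs hU hV hs ht))).deriv
    have a6 := a4.trans a5
    have a7 := hL s hs t ht
    rw [a6, a1 s hs t ht, he s hs t ht] at a7
    rw [← a7]
    ring
  have x1 := expand n1 h1 e1 hL1
  have x2 := expand n2 h2 e2 hL2
  have x3 := expand n3 h3 e3 hL3
  have key : ∀ s ∈ U, ∀ t ∈ V, G s t * pdt G s t = 0 ∧ G s t * pds G s t = 0 := by
    intro s hs t ht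
    have q0 := hq0 s hs t ht
    have X1 := x1 s hs t ht
    have X2 := x2 s hs t ht
    have X3 := x3 s hs t ht
    have S1 := hs1 s hs t ht
    have S2 := hs2 s hs t ht
    have S3 := hs3 s hs t ht
    have T1 := ht1 s hs t ht
    have T2 := ht2 s hs t ht
    have T3 := ht3 s hs t ht
    have G0 := hGG s t
    have g0 := hgg s t
    generalize pds (pdt G) s t = Gst at *
    generalize pdt G s t = Gt at *
    generalize pds G s t = Gs at *
    generalize G s t = GG at *
    generalize g s t = gg at *
    generalize q s t = qq at *
    generalize pds n1 s t = u1 at *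
    generalize pds n2 s t = u2 at *
    generalize pds n3 s t = u3 at *
    generalize pdt n1 s t = v1 at *
    generalize pdt n2 s t = v2 at *
    generalize pdt n3 s t = v3 at *
    generalize n1 s t = m1 at *
    generalize n2 s t = m2 at *
    generalize n3 s t = m3 at *
    have hI0 : I ≠ 0 := by rintro rfl; norm_num at hI
    -- first cross product with n
    have y1 : Gt * u1 - Gs * v1 = 0 := by
      apply mul_left_cancel₀ (mul_ne_zero q0 hI0)
      linear_combination m2 * X3 - m3 * X2 - qq * Gt * S1 - qq * Gs * T1
    have y2 : Gt * u2 - Gs * v2 = 0 := by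
      apply mul_left_cancel₀ (mul_ne_zero q0 hI0)
      linear_combination m3 * X1 - m1 * X3 - qq * Gt * S2 - qq * Gs * T2
    have y3 : Gt * u3 - Gs * v3 = 0 := by
      apply mul_left_cancel₀ (mul_ne_zero q0 hI0)
      linear_combination m1 * X2 - m2 * X1 - qq * Gt * S3 - qq * Gs * T3
    have z1 : Gt * u1 + Gs * v1 = 0 := by
      apply mul_left_cancel₀ hI0
      linear_combination m2 * y3 - m3 * y2 - Gt * S1 + Gs * T1
    have z2 : Gt * u2 + Gs * v2 = 0 := by
      apply mul_left_cancel₀ hI0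
      linear_combination m3 * y1 - m1 * y3 - Gt * S2 + Gs * T2
    have z3 : Gt * u3 + Gs * v3 = 0 := by
      apply mul_left_cancel₀ hI0
      linear_combination m1 * y2 - m2 * y1 - Gt * S3 + Gs * T3
    rw [G0, g0]
    constructor
    · linear_combination (-qq / 2) * (v1 * (y1 + z1) + v2 * (y2 + z2) + v3 * (y3 + z3))
    · linear_combination (-qq / 2) * (u1 * (z1 - y1) + u2 * (z2 - y2) + u3 * (z3 - y3))
  have hG2S : Sm U V (fun s t => G s t * G s t) := ContDiffOn.mul hGS hGS
  have hc2 := const_of_pd hU hV hU' hV' hG2S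
    (fun s hs t ht => (((hGS.hs hU hV hs ht).mul (hGS.hs hU hV hs ht)).deriv).trans (by
      linear_combination 2 * (key s hs t ht).2))
    (fun s hs t ht => (((hGS.ht hU hV hs ht).mul (hGS.ht hU hV hs ht)).deriv).trans (by
      linear_combination 2 * (key s hs t ht).1))
  have fin : ∀ r : ℝ, (∀ s ∈ U, ∀ t ∈ V, G s t = r) → ∀ s ∈ U, ∀ t ∈ V,
      q s t * pds (pdt n1) s t = r * n1 s t ∧
      q s t * pds (pdt n2) s t = r * n2 s t ∧ q s t * pds (pdt n3) s t = r * n3 s t := by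
    intro r hr s hs t ht
    rw [e1 s hs t ht, e2 s hs t ht, e3 s hs t ht, ← hr s hs t ht, hGG]
    refine ⟨?_, ?_, ?_⟩ <;> ring
  by_cases hz : ∀ s ∈ U, ∀ t ∈ V, G s t = 0
  · exact ⟨0, fin 0 (by simpa using hz)⟩
  push Not at hz
  obtain ⟨s0, hs0, t0, ht0, hne⟩ := hz
  have hne' : ∀ s ∈ U, ∀ t ∈ V, G s t ≠ 0 := by
    intro s hs t ht h0
    have := hc2 s hs t ht s0 hs0 t0 ht0
    simp only [h0, mul_zero] at this
    exact hne (mul_self_eq_zero.1 this.symm)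
  have hps : ∀ s ∈ U, ∀ t ∈ V, pds G s t = 0 := fun s hs t ht =>
    (mul_eq_zero.1 (key s hs t ht).2).resolve_left (hne' s hs t ht)
  have hpt : ∀ s ∈ U, ∀ t ∈ V, pdt G s t = 0 := fun s hs t ht =>
    (mul_eq_zero.1 (key s hs t ht).1).resolve_left (hne' s hs t ht)
  have hc := const_of_pd hU hV hU' hV' hGS hps hpt
  have hst : pds (pdt G) s0 t0 = 0 := by
    have := pds_congr hU (y := fun _ _ => (0 : ℂ)) hpt s0 hs0 t0 ht0
    rw [this]; simp [pds]
  have hGf : G s0 t0 = f s0 t0 := by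
    have X1 := x1 s0 hs0 t0 ht0
    have X2 := x2 s0 hs0 t0 ht0
    have X3 := x3 s0 hs0 t0 ht0
    rw [hst, hps s0 hs0 t0 ht0, hpt s0 hs0 t0 ht0] at X1 X2 X3
    apply mul_left_cancel₀ hne
    linear_combination n1 s0 t0 * X1 + n2 s0 t0 * X2 + n3 s0 t0 * X3
      + (f s0 t0 * G s0 t0 - q s0 t0 * G s0 t0 * g s0 t0) * hn s0 hs0 t0 ht0 + G s0 t0 * hGG s0 t0
  exact ⟨f s0 t0, fin _ fun s hs t ht => (hc s hs t ht s0 hs0 t0 ht0).trans hGf⟩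

theorem pds_apply2 {U V : Set ℝ} (hU : IsOpen U) (hV : IsOpen V)
    {x : ℝ → ℝ → Fin 4 → Fin 4 → ℝ} (h : Sm U V x) (i j : Fin 4) :
    ∀ s ∈ U, ∀ t ∈ V, pds x s t i j = pds (fun s t => x s t i j) s t := by
  intro s hs t ht
  exact ((hasDerivAt_pi.1 (hasDerivAt_pi.1 (h.hs hU hV hs ht) i) j).deriv).symm

theorem pdt_apply2 {U V : Set ℝ} (hU : IsOpen U) (hV : IsOpen V)
    {x : ℝ → ℝ → Fin 4 → Fin 4 → ℝ} (h : Sm U V x) (i j : Fin 4) :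
    ∀ s ∈ U, ∀ t ∈ V, pdt x s t i j = pdt (fun s t => x s t i j) s t := by
  intro s hs t ht
  exact ((hasDerivAt_pi.1 (hasDerivAt_pi.1 (h.ht hU hV hs ht) i) j).deriv).symm

theorem Sm.apply2 {U V : Set ℝ} {x : ℝ → ℝ → Fin 4 → Fin 4 → ℝ} (h : Sm U V x) (i j : Fin 4) :
    Sm U V (fun s t => x s t i j) := contDiffOn_pi.1 (contDiffOn_pi.1 h i) j

/-- complexified components -/
def cx (x : ℝ → ℝ → Fin 4 → Fin 4 → ℝ) (i j k l : Fin 4) : ℝ → ℝ → ℂ :=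
  fun s t => (x s t i j : ℂ) + Complex.I * (x s t k l : ℂ)

theorem Sm.ofReal {U V : Set ℝ} {x : ℝ → ℝ → ℝ} (h : Sm U V x) :
    Sm U V (fun s t => (x s t : ℂ)) :=
  Complex.ofRealCLM.contDiff.comp_contDiffOn h

theorem Sm.cx {U V : Set ℝ} {x : ℝ → ℝ → Fin 4 → Fin 4 → ℝ} (h : Sm U V x) (i j k l : Fin 4) :
    Sm U V (cx x i j k l) :=
  ContDiffOn.add (h.apply2 i j).ofReal (contDiffOn_const.mul (h.apply2 k l).ofReal)

theorem pds_cx {U V : Set ℝ} (hU : IsOpen U) (hV : IsOpen V)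
    {x : ℝ → ℝ → Fin 4 → Fin 4 → ℝ} (h : Sm U V x) (i j k l : Fin 4) :
    ∀ s ∈ U, ∀ t ∈ V, pds (cx x i j k l) s t = cx (pds x) i j k l s t := by
  intro s hs t ht
  have h1 := hasDerivAt_pi.1 (hasDerivAt_pi.1 (h.hs hU hV hs ht) i) j
  have h2 := hasDerivAt_pi.1 (hasDerivAt_pi.1 (h.hs hU hV hs ht) k) l
  exact (h1.ofReal_comp.add (h2.ofReal_comp.const_mul Complex.I)).deriv

theorem pdt_cx {U V : Set ℝ} (hU : IsOpen U) (hV : IsOpen V)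
    {x : ℝ → ℝ → Fin 4 → Fin 4 → ℝ} (h : Sm U V x) (i j k l : Fin 4) :
    ∀ s ∈ U, ∀ t ∈ V, pdt (cx x i j k l) s t = cx (pdt x) i j k l s t := by
  intro s hs t ht
  have h1 := hasDerivAt_pi.1 (hasDerivAt_pi.1 (h.ht hU hV hs ht) i) j
  have h2 := hasDerivAt_pi.1 (hasDerivAt_pi.1 (h.ht hU hV hs ht) k) l
  exact (h1.ofReal_comp.add (h2.ofReal_comp.const_mul Complex.I)).deriv

theorem pdst_cx {U V : Set ℝ} (hU : IsOpen U) (hV : IsOpen V)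
    {x : ℝ → ℝ → Fin 4 → Fin 4 → ℝ} (h : Sm U V x) (i j k l : Fin 4) :
    ∀ s ∈ U, ∀ t ∈ V, pds (pdt (cx x i j k l)) s t = cx (pds (pdt x)) i j k l s t := by
  intro s hs t ht
  rw [pds_congr hU (pdt_cx hU hV h i j k l) s hs t ht, pds_cx hU hV (h.pdt hU hV) i j k l s hs t ht]

theorem smooth_deriv {U : Set ℝ} (hU : IsOpen U) {α : ℝ → Fin 4 → ℝ}
    (h : ContDiffOn ℝ (⊤ : ℕ∞) α U) : ContDiffOn ℝ (⊤ : ℕ∞) (deriv α) U :=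
  h.deriv_of_isOpen hU (by simp)

theorem hasDeriv_comp {U : Set ℝ} (hU : IsOpen U) {a : ℝ → Fin 4 → ℝ}
    (h : ContDiffOn ℝ (⊤ : ℕ∞) a U) {s : ℝ} (hs : s ∈ U) (i : Fin 4) :
    HasDerivAt (fun u => a u i) (deriv a s i) s :=
  hasDerivAt_pi.1 (((h.contDiffAt (hU.mem_nhds hs)).differentiableAt (by simp)).hasDerivAt) i

theorem hasDeriv_B4 {v w : ℝ → Fin 4 → ℝ} {v' w' : Fin 4 → ℝ} {s : ℝ}
    (hv : ∀ i, HasDerivAt (fun u => v u i) (v' i) s)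
    (hw : ∀ i, HasDerivAt (fun u => w u i) (w' i) s) :
    HasDerivAt (fun u => B4 (v u) (w u)) (B4 v' (w s) + B4 (v s) w') s := by
  have := (((((hv 0).mul (hw 0)).neg).add ((hv 1).mul (hw 1))).add ((hv 2).mul (hw 2))).add
    ((hv 3).mul (hw 3))
  refine this.congr_deriv ?_
  simp only [B4]; ring

theorem Sm_fst {U V : Set ℝ} {a : ℝ → Fin 4 → ℝ} (h : ContDiffOn ℝ (⊤ : ℕ∞) a U) (i : Fin 4) :
    Sm U V (fun s _ => a s i) :=
  ContDiffOn.comp (contDiffOn_pi.1 h i) contDiff_fst.contDiffOn (fun z hz => hz.1)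

theorem Sm_snd {U V : Set ℝ} {a : ℝ → Fin 4 → ℝ} (h : ContDiffOn ℝ (⊤ : ℕ∞) a V) (i : Fin 4) :
    Sm U V (fun _ t => a t i) :=
  ContDiffOn.comp (contDiffOn_pi.1 h i) contDiff_snd.contDiffOn (fun z hz => hz.2)

section geom
variable {U V : Set ℝ} (hU : IsOpen U) (hV : IsOpen V) {α β : ℝ → Fin 4 → ℝ}
  (hα : ContDiffOn ℝ (⊤ : ℕ∞) α U) (hβ : ContDiffOn ℝ (⊤ : ℕ∞) β V)

theorem Sm_msq (hU : IsOpen U) (hV : IsOpen V)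
    (hα : ContDiffOn ℝ (⊤ : ℕ∞) α U) (hβ : ContDiffOn ℝ (⊤ : ℕ∞) β V) : Sm U V (msq α β) := by
  have ha := fun i => Sm_fst (V := V) (smooth_deriv hU hα) i
  have hb := fun i => Sm_snd (U := U) (smooth_deriv hV hβ) i
  exact ((((((ha 0).mul (hb 0)).neg).add ((ha 1).mul (hb 1))).add ((ha 2).mul (hb 2))).add
    ((ha 3).mul (hb 3))).neg

theorem Sm_gauss (hU : IsOpen U) (hV : IsOpen V)
    (hα : ContDiffOn ℝ (⊤ : ℕ∞) α U) (hβ : ContDiffOn ℝ (⊤ : ℕ∞) β V)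
    (h0 : ∀ s ∈ U, ∀ t ∈ V, msq α β s t ≠ 0) : Sm U V (gaussMap α β) := by
  have ha := fun i => Sm_fst (V := V) (smooth_deriv hU hα) i
  have hb := fun i => Sm_snd (U := U) (smooth_deriv hV hβ) i
  refine contDiffOn_pi.2 fun i => contDiffOn_pi.2 fun j => ?_
  exact (contDiffOn_const.div (Sm_msq hU hV hα hβ) (fun z hz => h0 z.1 hz.1 z.2 hz.2)).mul
    (((ha i).mul (hb j)).sub ((ha j).mul (hb i)))

theorem pds_gauss (hU : IsOpen U) (hV : IsOpen V)
    (hα : ContDiffOn ℝ (⊤ : ℕ∞) α U) (hβ : ContDiffOn ℝ (⊤ : ℕ∞) β V)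
    (h0 : ∀ s ∈ U, ∀ t ∈ V, msq α β s t ≠ 0) (i j : Fin 4) : ∀ s ∈ U, ∀ t ∈ V,
    pds (gaussMap α β) s t i j = (wedge (deriv (deriv α) s) (deriv β t) i j * msq α β s t
      + wedge (deriv α s) (deriv β t) i j * B4 (deriv (deriv α) s) (deriv β t))
        / (msq α β s t) ^ 2 := by
  intro s hs t ht
  rw [pds_apply2 hU hV (Sm_gauss hU hV hα hβ h0) i j s hs t ht]
  have ha := fun i => hasDeriv_comp hU (smooth_deriv hU hα) hs i
  have hB := (hasDeriv_B4 ha (w := fun _ => deriv β t) (w' := 0)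
    (fun i => hasDerivAt_const s (deriv β t i))).neg
  have hm0 := h0 s hs t ht
  have := (((hasDerivAt_const s (1 : ℝ)).div hB hm0).mul
    (((ha i).mul_const (deriv β t j)).sub ((ha j).mul_const (deriv β t i)))).deriv
  refine Eq.trans this ?_

  have e : -B4 (deriv α s) (deriv β t) = msq α β s t := rfl
  have e0 : B4 (deriv α s) 0 = 0 := by simp [B4]
  simp only [e, e0, wedge, Pi.neg_apply, Pi.sub_apply, Pi.div_apply]
  field_simp
  ring

theorem pdt_gauss (hU : IsOpen U) (hV : IsOpen V)
    (hα : ContDiffOn ℝ (⊤ : ℕ∞) α U) (hβ : ContDiffOn ℝ (⊤ : ℕ∞) β V)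
    (h0 : ∀ s ∈ U, ∀ t ∈ V, msq α β s t ≠ 0) (i j : Fin 4) : ∀ s ∈ U, ∀ t ∈ V,
    pdt (gaussMap α β) s t i j = (wedge (deriv α s) (deriv (deriv β) t) i j * msq α β s t
      + wedge (deriv α s) (deriv β t) i j * B4 (deriv α s) (deriv (deriv β) t))
        / (msq α β s t) ^ 2 := by
  intro s hs t ht
  rw [pdt_apply2 hU hV (Sm_gauss hU hV hα hβ h0) i j s hs t ht]
  have hb := fun i => hasDeriv_comp hV (smooth_deriv hV hβ) ht i
  have hB := (hasDeriv_B4 (v := fun _ => deriv α s) (v' := 0)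
    (fun i => hasDerivAt_const t (deriv α s i)) hb).neg
  have hm0 := h0 s hs t ht
  have := (((hasDerivAt_const t (1 : ℝ)).div hB hm0).mul
    (((hb j).const_mul (deriv α s i)).sub ((hb i).const_mul (deriv α s j)))).deriv
  refine Eq.trans this ?_
  have e : -B4 (deriv α s) (deriv β t) = msq α β s t := rfl
  have e0 : B4 0 (deriv β t) = 0 := by simp [B4]
  simp only [e, e0, wedge, Pi.neg_apply, Pi.sub_apply, Pi.div_apply]
  field_simp
  ring

theorem pdst_gauss (hU : IsOpen U) (hV : IsOpen V)
    (hα : ContDiffOn ℝ (⊤ : ℕ∞) α U) (hβ : ContDiffOn ℝ (⊤ : ℕ∞) β V)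
    (h0 : ∀ s ∈ U, ∀ t ∈ V, msq α β s t ≠ 0) (i j : Fin 4) : ∀ s ∈ U, ∀ t ∈ V,
    pds (pdt (gaussMap α β)) s t i j = (1 / msq α β s t) * (wedge (eta1 α β s t) (eta2 α β s t) i j
      + B4 (eta1 α β s t) (eta2 α β s t) * gaussMap α β s t i j) := by
  intro s hs t ht
  rw [pds_apply2 hU hV ((Sm_gauss hU hV hα hβ h0).pdt hU hV) i j s hs t ht,
    pds_congr hU (pdt_gauss hU hV hα hβ h0 i j) s hs t ht]
  have ha := fun i => hasDeriv_comp hU (smooth_deriv hU hα) hs i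
  have hB := (hasDeriv_B4 ha (w := fun _ => deriv β t) (w' := 0)
    (fun i => hasDerivAt_const s (deriv β t i))).neg
  have hB' := (hasDeriv_B4 ha (w := fun _ => deriv (deriv β) t) (w' := 0)
    (fun i => hasDerivAt_const s (deriv (deriv β) t i)))
  have hm0 := h0 s hs t ht
  have w1 := ((ha i).mul_const (deriv β t j)).sub ((ha j).mul_const (deriv β t i))
  have w2 := ((ha i).mul_const (deriv (deriv β) t j)).sub ((ha j).mul_const (deriv (deriv β) t i))
  have := (((w2.mul hB).add (w1.mul hB')).div (hB.pow 2) (pow_ne_zero 2 hm0)).deriv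
  refine Eq.trans this ?_
  have e : B4 (deriv α s) (deriv β t) = -msq α β s t := by simp [msq]
  have e0 : B4 (deriv α s) 0 = 0 := by simp [B4]
  have eta : B4 (eta1 α β s t) (eta2 α β s t) = B4 (deriv (deriv α) s) (deriv (deriv β) t)
      + B4 (deriv (deriv α) s) (deriv β t) * B4 (deriv α s) (deriv (deriv β) t) / msq α β s t := by
    have c : B4 (deriv (deriv β) t) (deriv α s) = B4 (deriv α s) (deriv (deriv β) t) := by
      simp only [B4]; ring
    have key : ∀ (a a' b b' : Fin 4 → ℝ) (x y : ℝ), B4 (a' - x • a) (b' - y • b) =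
      B4 a' b' - x * B4 a b' - y * B4 a' b + x * y * B4 a b := by
      intros; simp only [B4, Pi.sub_apply, Pi.smul_apply, smul_eq_mul]; ring
    rw [eta1, eta2, key, c, e]
    field_simp
    ring
  rw [eta]
  simp only [eta1, eta2, gaussMap, wedge, Pi.neg_apply, Pi.sub_apply, Pi.smul_apply, Pi.mul_apply,
    Pi.pow_apply, Pi.add_apply, smul_eq_mul, e, e0]
  have c : B4 (deriv (deriv β) t) (deriv α s) = B4 (deriv α s) (deriv (deriv β) t) := by
    simp only [B4]; ring
  rw [c]
  field_simp
  ring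

end geom

theorem cross_alg (I a0 a1 a2 a3 c0 c1 c2 c3 b0 b1 b2 b3 p β : ℂ) (hI : I ^ 2 = -1)
    (hp : p = a0 * b0 - a1 * b1 - a2 * b2 - a3 * b3)
    (hβ : β = -c0 * b0 + c1 * b1 + c2 * b2 + c3 * b3)
    (hb : -b0 * b0 + b1 * b1 + b2 * b2 + b3 * b3 = 0) :
    ((a0 * b2 - a2 * b0) + I * (a1 * b3 - a3 * b1)) * ((c0 * b3 - c3 * b0) + I * (c2 * b1 - c1 * b2))
    - ((a0 * b3 - a3 * b0) + I * (a2 * b1 - a1 * b2)) * ((c0 * b2 - c2 * b0) + I * (c1 * b3 - c3 * b1))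
    = I * (((c0 * b1 - c1 * b0) + I * (c3 * b2 - c2 * b3)) * p
      + ((a0 * b1 - a1 * b0) + I * (a3 * b2 - a2 * b3)) * β) := by
  subst hp hβ
  linear_combination (-1) * ((a0 * c1 - a1 * c0) * I - (a3 * c2 - a2 * c3)) * hb
    + ((a1 * b3 - a3 * b1) * (c2 * b1 - c1 * b2) - (a2 * b1 - a1 * b2) * (c1 * b3 - c3 * b1)
     - (c3 * b2 - c2 * b3) * (a0 * b0 - a1 * b1 - a2 * b2 - a3 * b3)
     - (a3 * b2 - a2 * b3) * (-c0 * b0 + c1 * b1 + c2 * b2 + c3 * b3)) * hI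

theorem cross_div (I A1 A2 A3 C1 C2 C3 p β : ℂ) (hp : p ≠ 0)
    (h : A2 * C3 - A3 * C2 = I * (C1 * p + A1 * β)) :
    (1 / p * A2) * ((C3 * p + A3 * β) / p ^ 2) - (1 / p * A3) * ((C2 * p + A2 * β) / p ^ 2)
      = I * ((C1 * p + A1 * β) / p ^ 2) := by
  have : (1 / p * A2) * ((C3 * p + A3 * β) / p ^ 2) - (1 / p * A3) * ((C2 * p + A2 * β) / p ^ 2)
    = (A2 * C3 - A3 * C2) / p ^ 2 := by field_simp; ring
  rw [this, h, mul_div_assoc]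

/-- complexified wedge -/
def cw (v w : Fin 4 → ℝ) (i j k l : Fin 4) : ℂ :=
  ((v i : ℂ) * w j - v j * w i) + Complex.I * ((v k : ℂ) * w l - v l * w k)

theorem cw_cross (a c b : Fin 4 → ℝ) (hb : B4 b b = 0) :
    (cw a b 0 2 1 3 * cw c b 0 3 2 1 - cw a b 0 3 2 1 * cw c b 0 2 1 3
      = Complex.I * (cw c b 0 1 3 2 * ((-B4 a b : ℝ) : ℂ) + cw a b 0 1 3 2 * (B4 c b : ℝ))) ∧
    (cw a b 0 3 2 1 * cw c b 0 1 3 2 - cw a b 0 1 3 2 * cw c b 0 3 2 1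
      = Complex.I * (cw c b 0 2 1 3 * ((-B4 a b : ℝ) : ℂ) + cw a b 0 2 1 3 * (B4 c b : ℝ))) ∧
    (cw a b 0 1 3 2 * cw c b 0 2 1 3 - cw a b 0 2 1 3 * cw c b 0 1 3 2
      = Complex.I * (cw c b 0 3 2 1 * ((-B4 a b : ℝ) : ℂ) + cw a b 0 3 2 1 * (B4 c b : ℝ))) := by
  have hb' : ((B4 b b : ℝ) : ℂ) = 0 := by rw [hb]; simp
  simp only [B4] at hb' ⊢
  push_cast at hb' ⊢
  unfold cw
  refine ⟨?_, ?_, ?_⟩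
  · exact cross_alg Complex.I (a 0) (a 1) (a 2) (a 3) (c 0) (c 1) (c 2) (c 3) (b 0) (b 1) (b 2) (b 3)
      _ _ Complex.I_sq (by ring) (by ring) (by linear_combination hb')
  · exact cross_alg Complex.I (a 0) (a 2) (a 3) (a 1) (c 0) (c 2) (c 3) (c 1) (b 0) (b 2) (b 3) (b 1)
      _ _ Complex.I_sq (by ring) (by ring) (by linear_combination hb')
  · exact cross_alg Complex.I (a 0) (a 3) (a 1) (a 2) (c 0) (c 3) (c 1) (c 2) (b 0) (b 3) (b 1) (b 2)
      _ _ Complex.I_sq (by ring) (by ring) (by linear_combination hb')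

theorem cw_swap (a b : Fin 4 → ℝ) (i j k l : Fin 4) : cw a b i j k l = - cw b a i j k l := by
  unfold cw; ring

theorem B4_comm (a b : Fin 4 → ℝ) : B4 a b = B4 b a := by simp only [B4]; ring

theorem cw_cross' (a c b : Fin 4 → ℝ) (ha : B4 a a = 0) :
    (cw a b 0 2 1 3 * cw a c 0 3 2 1 - cw a b 0 3 2 1 * cw a c 0 2 1 3
      = -Complex.I * (cw a c 0 1 3 2 * ((-B4 a b : ℝ) : ℂ) + cw a b 0 1 3 2 * (B4 a c : ℝ))) ∧
    (cw a b 0 3 2 1 * cw a c 0 1 3 2 - cw a b 0 1 3 2 * cw a c 0 3 2 1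
      = -Complex.I * (cw a c 0 2 1 3 * ((-B4 a b : ℝ) : ℂ) + cw a b 0 2 1 3 * (B4 a c : ℝ))) ∧
    (cw a b 0 1 3 2 * cw a c 0 2 1 3 - cw a b 0 2 1 3 * cw a c 0 1 3 2
      = -Complex.I * (cw a c 0 3 2 1 * ((-B4 a b : ℝ) : ℂ) + cw a b 0 3 2 1 * (B4 a c : ℝ))) := by
  obtain ⟨h1, h2, h3⟩ := cw_cross b c a ha
  simp only [cw_swap a b, cw_swap a c, B4_comm a b, B4_comm a c]
  refine ⟨?_, ?_, ?_⟩
  · linear_combination h1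
  · linear_combination h2
  · linear_combination h3

theorem cw_norm (a b : Fin 4 → ℝ) (ha : B4 a a = 0) :
    cw a b 0 1 3 2 ^ 2 + cw a b 0 2 1 3 ^ 2 + cw a b 0 3 2 1 ^ 2 = ((-B4 a b : ℝ) : ℂ) ^ 2 := by
  have ha' : ((B4 a a : ℝ) : ℂ) = 0 := by rw [ha]; simp
  simp only [B4] at ha' ⊢
  push_cast at ha' ⊢
  unfold cw
  linear_combination (((a 3 : ℂ) * b 2 - a 2 * b 3) ^ 2 + ((a 1 : ℂ) * b 3 - a 3 * b 1) ^ 2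
    + ((a 2 : ℂ) * b 1 - a 1 * b 2) ^ 2) * Complex.I_sq
    - (-(b 0 : ℂ) * b 0 + b 1 * b 1 + b 2 * b 2 + b 3 * b 3) * ha'

/-- Theorem 4.2 (explicit form): if `Δ²ν = f·Δν` for a smooth function `f`, then
`η₁ ∧ η₂ ≡ 0`, the Gaussian curvature `K = B(η₁,η₂)/m⁴` is a constant, and
`Δν = 2K·ν` everywhere, so the Gauss map is of 1-type. -/
theorem biharmonic_type_equation_implies_one_type
    (I₁ I₂ : Set ℝ) (hI₁ : IsOpen I₁) (hI₂ : IsOpen I₂)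
    (hI₁' : I₁.OrdConnected) (hI₂' : I₂.OrdConnected)
    (α β : ℝ → Fin 4 → ℝ)
    (hα : ContDiffOn ℝ (⊤ : ℕ∞) α I₁) (hβ : ContDiffOn ℝ (⊤ : ℕ∞) β I₂)
    (hαnull : ∀ s ∈ I₁, B4 (deriv α s) (deriv α s) = 0)
    (hβnull : ∀ t ∈ I₂, B4 (deriv β t) (deriv β t) = 0)
    (hneg : ∀ s ∈ I₁, ∀ t ∈ I₂, B4 (deriv α s) (deriv β t) < 0)
    (f : ℝ → ℝ → ℝ) (hf : ContDiffOn ℝ (⊤ : ℕ∞) (Function.uncurry f) (I₁ ×ˢ I₂))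
    (hmain : ∀ s ∈ I₁, ∀ t ∈ I₂,
      lap α β (lap α β (gaussMap α β)) s t = f s t • lap α β (gaussMap α β) s t) :
    (∀ s ∈ I₁, ∀ t ∈ I₂, wedge (eta1 α β s t) (eta2 α β s t) = 0) ∧
    ∃ K : ℝ,
      (∀ s ∈ I₁, ∀ t ∈ I₂, B4 (eta1 α β s t) (eta2 α β s t) / (msq α β s t) ^ 2 = K) ∧
      (∀ s ∈ I₁, ∀ t ∈ I₂, lap α β (gaussMap α β) s t = (2 * K) • gaussMap α β s t) := by
  have hm : ∀ s ∈ I₁, ∀ t ∈ I₂, msq α β s t ≠ 0 := fun s hs t ht =>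
    neg_ne_zero.2 (hneg s hs t ht).ne
  have hν := Sm_gauss hI₁ hI₂ hα hβ hm
  have hmC : ∀ s ∈ I₁, ∀ t ∈ I₂, (msq α β s t : ℂ) ≠ 0 := fun s hs t ht => by
    exact_mod_cast hm s hs t ht
  have hqR : Sm I₁ I₂ (fun s t => 2 / msq α β s t) :=
    contDiffOn_const.div (Sm_msq hI₁ hI₂ hα hβ) (fun z hz => hm z.1 hz.1 z.2 hz.2)
  have hlapS : Sm I₁ I₂ (lap α β (gaussMap α β)) :=
    ContDiffOn.smul hqR ((hν.pdt hI₁ hI₂).pds hI₁ hI₂)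
  have vcx : ∀ (i j k l : Fin 4) (s t : ℝ), cx (gaussMap α β) i j k l s t =
      1 / (msq α β s t : ℂ) * cw (deriv α s) (deriv β t) i j k l := by
    intro i j k l s t
    simp only [cx, cw, gaussMap, wedge, Pi.smul_apply, smul_eq_mul]
    push_cast
    ring
  have vs : ∀ (i j k l : Fin 4), ∀ s ∈ I₁, ∀ t ∈ I₂, pds (cx (gaussMap α β) i j k l) s t =
      (cw (deriv (deriv α) s) (deriv β t) i j k l * (msq α β s t : ℂ) +
        cw (deriv α s) (deriv β t) i j k l * (B4 (deriv (deriv α) s) (deriv β t) : ℝ))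
        / (msq α β s t : ℂ) ^ 2 := by
    intro i j k l s hs t ht
    rw [pds_cx hI₁ hI₂ hν i j k l s hs t ht]
    simp only [cx, cw, pds_gauss hI₁ hI₂ hα hβ hm _ _ s hs t ht, wedge]
    push_cast
    ring
  have vt : ∀ (i j k l : Fin 4), ∀ s ∈ I₁, ∀ t ∈ I₂, pdt (cx (gaussMap α β) i j k l) s t =
      (cw (deriv α s) (deriv (deriv β) t) i j k l * (msq α β s t : ℂ) +
        cw (deriv α s) (deriv β t) i j k l * (B4 (deriv α s) (deriv (deriv β) t) : ℝ))
        / (msq α β s t : ℂ) ^ 2 := by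
    intro i j k l s hs t ht
    rw [pdt_cx hI₁ hI₂ hν i j k l s hs t ht]
    simp only [cx, cw, pdt_gauss hI₁ hI₂ hα hβ hm _ _ s hs t ht, wedge]
    push_cast
    ring
  have vl : ∀ (i j k l : Fin 4), ∀ s ∈ I₁, ∀ t ∈ I₂,
      ((2 / msq α β s t : ℝ) : ℂ) * pds (pdt (cx (gaussMap α β) i j k l)) s t =
      cx (lap α β (gaussMap α β)) i j k l s t := by
    intro i j k l s hs t ht
    rw [pdst_cx hI₁ hI₂ hν i j k l s hs t ht]
    simp only [cx, lap, Pi.smul_apply, smul_eq_mul]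
    push_cast
    ring
  have vL : ∀ (i j k l : Fin 4), ∀ s ∈ I₁, ∀ t ∈ I₂,
      ((2 / msq α β s t : ℝ) : ℂ) * pds (pdt (fun s t => ((2 / msq α β s t : ℝ) : ℂ) *
        pds (pdt (cx (gaussMap α β) i j k l)) s t)) s t =
      f s t * (((2 / msq α β s t : ℝ) : ℂ) * pds (pdt (cx (gaussMap α β) i j k l)) s t) := by
    intro i j k l s hs t ht
    rw [pds_congr hI₁ (pdt_congr (U := I₁) hI₂ (vl i j k l)) s hs t ht,
      vl i j k l s hs t ht]
    rw [pdst_cx hI₁ hI₂ hlapS i j k l s hs t ht]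
    have hM := hmain s hs t ht
    have m1 := congrFun (congrFun hM i) j
    have m2 := congrFun (congrFun hM k) l
    rw [lap] at m1 m2
    simp only [Pi.smul_apply, smul_eq_mul] at m1 m2
    have m1' := congrArg (fun z : ℝ => (z : ℂ)) m1
    have m2' := congrArg (fun z : ℝ => (z : ℂ)) m2
    simp only [Complex.ofReal_mul] at m1' m2'
    simp only [cx]
    linear_combination m1' + Complex.I * m2'
  obtain ⟨r, hr⟩ := abstract_main hI₁ hI₂ hI₁' hI₂'
    (cx (gaussMap α β) 0 1 3 2) (cx (gaussMap α β) 0 2 1 3) (cx (gaussMap α β) 0 3 2 1)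
    (fun s t => ((2 / msq α β s t : ℝ) : ℂ)) f
    (hν.cx _ _ _ _) (hν.cx _ _ _ _) (hν.cx _ _ _ _) hqR.ofReal
    (fun s hs t ht => by
      have := div_ne_zero two_ne_zero (hm s hs t ht)
      exact_mod_cast this)
    (fun s hs t ht => by
      have h := cw_norm (deriv α s) (deriv β t) (hαnull s hs)
      have h0 := hmC s hs t ht
      change _ = (msq α β s t : ℂ) ^ 2 at h
      simp only [vcx]
      field_simp
      exact h)
    (fun s hs t ht => by
      simp only [vcx, vs _ _ _ _ s hs t ht]
      exact cross_div _ _ _ _ _ _ _ _ _ (hmC s hs t ht) (cw_cross _ _ _ (hβnull t ht)).1)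
    (fun s hs t ht => by
      simp only [vcx, vs _ _ _ _ s hs t ht]
      exact cross_div _ _ _ _ _ _ _ _ _ (hmC s hs t ht) (cw_cross _ _ _ (hβnull t ht)).2.1)
    (fun s hs t ht => by
      simp only [vcx, vs _ _ _ _ s hs t ht]
      exact cross_div _ _ _ _ _ _ _ _ _ (hmC s hs t ht) (cw_cross _ _ _ (hβnull t ht)).2.2)
    (fun s hs t ht => by
      simp only [vcx, vt _ _ _ _ s hs t ht]
      exact cross_div _ _ _ _ _ _ _ _ _ (hmC s hs t ht) (cw_cross' _ _ _ (hαnull s hs)).1)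
    (fun s hs t ht => by
      simp only [vcx, vt _ _ _ _ s hs t ht]
      exact cross_div _ _ _ _ _ _ _ _ _ (hmC s hs t ht) (cw_cross' _ _ _ (hαnull s hs)).2.1)
    (fun s hs t ht => by
      simp only [vcx, vt _ _ _ _ s hs t ht]
      exact cross_div _ _ _ _ _ _ _ _ _ (hmC s hs t ht) (cw_cross' _ _ _ (hαnull s hs)).2.2)
    (vL _ _ _ _) (vL _ _ _ _) (vL _ _ _ _)
  have lapf : ∀ (i j : Fin 4), ∀ s ∈ I₁, ∀ t ∈ I₂, lap α β (gaussMap α β) s t i j =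
      2 / msq α β s t * ((1 / msq α β s t) * (wedge (eta1 α β s t) (eta2 α β s t) i j
      + B4 (eta1 α β s t) (eta2 α β s t) * gaussMap α β s t i j)) := by
    intro i j s hs t ht
    rw [← pdst_gauss hI₁ hI₂ hα hβ hm i j s hs t ht]
    rfl
  have hlap : ∀ s ∈ I₁, ∀ t ∈ I₂, ∀ i j, lap α β (gaussMap α β) s t i j =
      r * gaussMap α β s t i j := by
    intro s hs t ht
    obtain ⟨r1, r2, r3⟩ := hr s hs t ht
    rw [vl _ _ _ _ s hs t ht] at r1 r2 r3
    have anti : ∀ i j, lap α β (gaussMap α β) s t i j = -lap α β (gaussMap α β) s t j i := by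
      intro i j
      rw [lapf i j s hs t ht, lapf j i s hs t ht]
      simp only [gaussMap, wedge, Pi.smul_apply, smul_eq_mul]
      ring
    have antig : ∀ i j, gaussMap α β s t i j = -gaussMap α β s t j i := by
      intro i j
      simp only [gaussMap, wedge, Pi.smul_apply, smul_eq_mul]
      ring
    have swap : ∀ i j, lap α β (gaussMap α β) s t i j = r * gaussMap α β s t i j →
        lap α β (gaussMap α β) s t j i = r * gaussMap α β s t j i := by
      intro i j h
      rw [anti j i, antig j i, h]; ring
    have diag : ∀ i, lap α β (gaussMap α β) s t i i = r * gaussMap α β s t i i := by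
      intro i
      have x := anti i i
      have y := antig i i
      have x' : lap α β (gaussMap α β) s t i i = 0 := by linarith
      have y' : gaussMap α β s t i i = 0 := by linarith
      rw [x', y', mul_zero]
    have split : ∀ i j k l, cx (lap α β (gaussMap α β)) i j k l s t =
        (r : ℂ) * cx (gaussMap α β) i j k l s t →
        lap α β (gaussMap α β) s t i j = r * gaussMap α β s t i j ∧
        lap α β (gaussMap α β) s t k l = r * gaussMap α β s t k l := by
      intro i j k l h
      have h1 := congrArg Complex.re h
      have h2 := congrArg Complex.im h
      simp [cx] at h1 h2
      exact ⟨h1, h2⟩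
    obtain ⟨p01, p32⟩ := split _ _ _ _ r1
    obtain ⟨p02, p13⟩ := split _ _ _ _ r2
    obtain ⟨p03, p21⟩ := split _ _ _ _ r3
    intro i j
    fin_cases i <;> fin_cases j
    · exact diag 0
    · exact p01
    · exact p02
    · exact p03
    · exact swap _ _ p01
    · exact diag 1
    · exact swap _ _ p21
    · exact p13
    · exact swap _ _ p02
    · exact p21
    · exact diag 2
    · exact swap _ _ p32
    · exact swap _ _ p03
    · exact swap _ _ p13
    · exact p32
    · exact diag 3
  have hw : ∀ s ∈ I₁, ∀ t ∈ I₂, ∀ i j, wedge (eta1 α β s t) (eta2 α β s t) i j =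
      (r * msq α β s t ^ 2 / 2 - B4 (eta1 α β s t) (eta2 α β s t)) * gaussMap α β s t i j := by
    intro s hs t ht i j
    have h := hlap s hs t ht i j
    have h0 := hm s hs t ht
    rw [lapf i j s hs t ht] at h
    field_simp at h
    linear_combination h / 2
  have hc : ∀ s ∈ I₁, ∀ t ∈ I₂,
      r * msq α β s t ^ 2 / 2 - B4 (eta1 α β s t) (eta2 α β s t) = 0 := by
    intro s hs t ht
    have W := hw s hs t ht
    have h0 := hm s hs t ht
    generalize r * msq α β s t ^ 2 / 2 - B4 (eta1 α β s t) (eta2 α β s t) = c at W ⊢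
    have contr : ∀ v w x y : Fin 4 → ℝ,
        B4 (fun i => B4 (wedge v w i) x) y = B4 v y * B4 w x - B4 v x * B4 w y := by
      intro v w x y
      simp only [B4, wedge]; ring
    have W' : wedge (eta1 α β s t) (eta2 α β s t) =
        fun i j => c / msq α β s t * wedge (deriv α s) (deriv β t) i j := by
      funext i j
      rw [W i j]
      simp only [gaussMap, Pi.smul_apply, smul_eq_mul]; ring
    have C1 := contr (eta1 α β s t) (eta2 α β s t) (deriv α s) (deriv β t)
    rw [W'] at C1
    have C2 := contr (deriv α s) (deriv β t) (deriv α s) (deriv β t)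
    have C3 : B4 (fun i => B4 ((fun i j => c / msq α β s t * wedge (deriv α s) (deriv β t) i j) i)
        (deriv α s)) (deriv β t) = c / msq α β s t *
        B4 (fun i => B4 (wedge (deriv α s) (deriv β t) i) (deriv α s)) (deriv β t) := by
      simp only [B4]; ring
    rw [C3, C2] at C1
    have hne : B4 (deriv α s) (deriv β t) ≠ 0 := (hneg s hs t ht).ne
    have sub1 : ∀ (v w z : Fin 4 → ℝ) (x : ℝ), B4 (v - x • w) z = B4 v z - x * B4 w z := by
      intros; simp only [B4, Pi.sub_apply, Pi.smul_apply, smul_eq_mul]; ring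
    have E1 : B4 (eta1 α β s t) (deriv β t) = 0 := by
      rw [eta1, sub1, div_mul_cancel₀ _ hne, sub_self]
    have E2 : B4 (eta2 α β s t) (deriv β t) = B4 (deriv (deriv β) t) (deriv β t) := by
      rw [eta2, sub1, hβnull t ht]; ring
    have E3 : B4 (eta2 α β s t) (deriv α s) = 0 := by
      rw [eta2, sub1, B4_comm (deriv β t), div_mul_cancel₀ _ hne, sub_self]
    have E4 : B4 (deriv (deriv β) t) (deriv β t) = 0 := by
      have hb := fun i => hasDeriv_comp hI₂ (smooth_deriv hI₂ hβ) ht i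
      have d := (hasDeriv_B4 hb hb).deriv
      have z : deriv (fun u => B4 (deriv β u) (deriv β u)) t = 0 := by
        have : (fun u => B4 (deriv β u) (deriv β u)) =ᶠ[nhds t] fun _ => 0 := by
          filter_upwards [hI₂.mem_nhds ht] with u hu using hβnull u hu
        rw [this.deriv_eq]; simp
      rw [z, B4_comm (deriv β t)] at d
      linarith
    rw [E1, E2, E4, hαnull s hs, B4_comm (deriv β t) (deriv α s)] at C1
    have hz : c / msq α β s t * (B4 (deriv α s) (deriv β t) * B4 (deriv α s) (deriv β t)) = 0 := by
      linear_combination C1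
    rcases mul_eq_zero.1 hz with h | h
    · exact (div_eq_zero_iff.1 h).resolve_right h0
    · exact absurd (mul_self_eq_zero.1 h) hne
  refine ⟨?_, r / 2, ?_, ?_⟩
  · intro s hs t ht
    funext i j
    rw [hw s hs t ht, hc s hs t ht, zero_mul]
    rfl
  · intro s hs t ht
    have h0 := hm s hs t ht
    rw [div_eq_iff (pow_ne_zero 2 h0)]
    linear_combination -hc s hs t ht
  · intro s hs t ht
    funext i j
    rw [hlap s hs t ht]
    simp only [Pi.smul_apply, smul_eq_mul]
    ring
end
end
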